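/- arXiv:math/0010250 — 2 statements merged into one kernel-verified Lean document; each statement's English description precedes it below -/
import Mathlib

section
/- For even N = 2n, the FRT–Clifford algebra Cl_{2n}(q,c) is a simple algebra: its only two-sided ideals are {0} and the whole algebra. -/
/-!
The first and the last generator, suitably normalised, satisfy the canonical anticommutation
relations `a² = b² = 0`, `ab + ba = 1`, and the inner generators commute with both up to the factor
`-q²`. Multiplying the inner generators by `ab - q² ba` makes them commute with `a` and `b`; the
products satisfy the relations of `Cl_{N-2}(q, cq²)`, since the term `γ_1 γ_N` in the relations of
`Cl_N(q, c)` is a multiple of the idempotent `ab`. As `ab`, `a`, `b`, `ba` are matrix units,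
`Cl_N(q, c)` is a quotient of the algebra of `2 × 2` matrices over `Cl_{N-2}(q, cq²)`, and the
absence of proper nonzero two-sided ideals passes to matrix algebras and to quotients.
-/

noncomputable section

namespace FRT

/-- The "dual" index `i' = N+1-i` (0-indexed: `N-1-i`). -/
def dual {N : ℕ} (i : Fin N) : Fin N := ⟨N - 1 - i.val, by have := i.2; omega⟩

/-- Generators of the free algebra. -/
def gen {N : ℕ} (i : Fin N) : FreeAlgebra ℂ (Fin N) := FreeAlgebra.ι ℂ i

/-- The sum `∑_{k<i} q^{2k-2i+2} γ_k γ_{k'}` appearing in the defining relations. -/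
def pairSum (N : ℕ) (q : ℂ) (i : Fin N) : FreeAlgebra ℂ (Fin N) :=
  ∑ k ∈ Finset.Iio i, (q ^ (2 * (k.val : ℤ) - 2 * (i.val : ℤ) + 2)) • (gen k * gen (dual k))

/-- The defining relations of the FRT–Clifford algebra `Cl_N(q,c)`. -/
inductive Rel (N : ℕ) (q c : ℂ) : FreeAlgebra ℂ (Fin N) → FreeAlgebra ℂ (Fin N) → Prop
  | sq (i : Fin N) (h : 2 * i.val + 1 ≠ N) : Rel N q c (gen i * gen i) 0
  | swap (i j : Fin N) (hlt : i < j) (h : i.val + j.val + 1 ≠ N) :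
      Rel N q c (gen j * gen i) ((-(q ^ 2)) • (gen i * gen j))
  | pair (i : Fin N) (h : 2 * i.val + 1 < N) :
      Rel N q c (gen (dual i) * gen i)
        (-(gen i * gen (dual i)) + (q ^ 2 - q⁻¹ ^ 2) • pairSum N q i +
          algebraMap ℂ _ (c ^ 2 * q ^ ((N : ℤ) - 2 * (i.val : ℤ) - 1) * (q + q⁻¹)))
  | middle (i : Fin N) (h : 2 * i.val + 1 = N) :
      Rel N q c (gen i * gen i) ((q - q⁻¹) • pairSum N q i + algebraMap ℂ _ (c ^ 2))

/-- The FRT–Clifford algebra `Cl_N(q,c)`. -/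
abbrev Cl (N : ℕ) (q c : ℂ) := RingQuot (Rel N q c)

/-- The generators `γ_i` of `Cl_N(q,c)`. -/
def γ (N : ℕ) (q c : ℂ) (i : Fin N) : Cl N q c :=
  RingQuot.mkAlgHom ℂ (Rel N q c) (gen i)

/-- Ordered product `γ_1 γ_2 ⋯ γ_m` of the first `m` generators. -/
def prodFirst (N : ℕ) (q c : ℂ) (m : ℕ) : Cl N q c :=
  (((List.finRange N).take m).map (γ N q c)).prod

/-- Ordered product `γ_{m+1} γ_{m+2} ⋯ γ_N` (0-indexed: indices `m,…,N-1`). -/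
def prodFrom (N : ℕ) (q c : ℂ) (m : ℕ) : Cl N q c :=
  (((List.finRange N).drop m).map (γ N q c)).prod

/-- The ordered monomial `γ_1^{i_1} ⋯ γ_N^{i_N}` for `i ∈ {0,1}^N`. -/
def monoB (N : ℕ) (q c : ℂ) (f : Fin N → Bool) : Cl N q c :=
  ((List.finRange N).map (fun i => if f i then γ N q c i else 1)).prod

/-- The ordered monomial `γ_1^{i_1} ⋯ γ_n^{i_n}` for `i ∈ {0,1}^n`, `n ≤ N`. -/
def monoLow (N : ℕ) (q c : ℂ) {n : ℕ} (h : n ≤ N) (f : Fin n → Bool) : Cl N q c :=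
  ((List.finRange n).map (fun j => if f j then γ N q c (Fin.castLE h j) else 1)).prod

/-- `z` is homogeneous of `∂_i`-degree `0`: it is fixed by every algebra endomorphism
rescaling `γ_i` by `t` and `γ_{i'}` by `t⁻¹`. -/
def DegZeroAt (N : ℕ) (q c : ℂ) (i : ℕ) (z : Cl N q c) : Prop :=
  ∀ t : ℂ, t ≠ 0 → ∀ f : Cl N q c →ₐ[ℂ] Cl N q c,
    (∀ j : Fin N, f (γ N q c j) =
      (if j.val = i then t else if j.val + i + 1 = N then t⁻¹ else 1) • γ N q c j) →
    f z = z

section TwoSidedIdeals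

variable {A B : Type*} [Ring A] [Ring B]

theorem eq_bot_or_eq_top_of_surjective (f : A →+* B) (hf : Function.Surjective f)
    (hA : ∀ I : TwoSidedIdeal A, I = ⊥ ∨ I = ⊤) (J : TwoSidedIdeal B) : J = ⊥ ∨ J = ⊤ := by
  refine (hA (J.comap f)).imp (fun hbot => ?_) (fun htop => ?_)
  · refine eq_bot_iff.2 fun y hy => ?_
    obtain ⟨x, rfl⟩ := hf y
    have hx : x ∈ J.comap f := (TwoSidedIdeal.mem_comap f).2 hy
    rw [hbot, TwoSidedIdeal.mem_bot] at hx
    rw [hx, map_zero]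
    exact zero_mem _
  · refine eq_top_iff.2 fun y _ => ?_
    obtain ⟨x, rfl⟩ := hf y
    rw [← TwoSidedIdeal.mem_comap f, htop]
    exact TwoSidedIdeal.mem_top _

theorem matrix_eq_bot_or_eq_top (ι : Type*) [Fintype ι] [Nonempty ι]
    (hA : ∀ I : TwoSidedIdeal A, I = ⊥ ∨ I = ⊤) (J : TwoSidedIdeal (Matrix ι ι A)) :
    J = ⊥ ∨ J = ⊤ := by
  classical
  let e : TwoSidedIdeal A ≃o TwoSidedIdeal (Matrix ι ι A) := TwoSidedIdeal.orderIsoMatrix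
  simpa only [map_eq_bot_iff, map_eq_top_iff] using hA (e.symm J)

end TwoSidedIdeals

section MatrixUnits

variable {ι R A B : Type*} [Fintype ι] [DecidableEq ι] [CommRing R] [Ring A] [Algebra R A]
  [Ring B] [Algebra R B]

/-- A system of matrix units: a family multiplying like the elementary matrices, with the diagonal
ones summing to `1`. -/
structure IsMatrixUnits (E : ι → ι → A) : Prop where
  mul_eq : ∀ i j k l, E i j * E k l = if j = k then E i l else 0
  sum_diag : ∑ i, E i i = 1

/-- The algebra homomorphism out of a matrix algebra determined by a homomorphism `φ` on the
coefficients and a system of matrix units commuting with the image of `φ`. -/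
def IsMatrixUnits.lift {E : ι → ι → A} (hE : IsMatrixUnits E) (φ : B →ₐ[R] A)
    (hφ : ∀ p i j, Commute (φ p) (E i j)) : Matrix ι ι B →ₐ[R] A :=
  AlgHom.ofLinearMap
    { toFun := fun M => ∑ i, ∑ j, φ (M i j) * E i j
      map_add' := fun M M' => by
        simp only [Matrix.add_apply, map_add, add_mul, Finset.sum_add_distrib]
      map_smul' := fun t M => by
        simp only [Matrix.smul_apply, map_smul, smul_mul_assoc, Finset.smul_sum,
          RingHom.id_apply] }
    (by simp [Matrix.one_apply, apply_ite φ, ite_mul, hE.sum_diag])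
    (fun M M' => by
      have hterm (i j k l : ι) : φ (M i j) * E i j * (φ (M' k l) * E k l) =
          if j = k then φ (M i j) * φ (M' k l) * E i l else 0 := by
        rw [(hφ (M' k l) i j).symm.mul_mul_mul_comm, hE.mul_eq, mul_ite, mul_zero]
      simp only [LinearMap.coe_mk, AddHom.coe_mk, Matrix.mul_apply, map_sum, map_mul,
        Finset.sum_mul, Finset.mul_sum, hterm, Finset.sum_ite_eq', Finset.mem_univ, if_true]
      rw [Finset.sum_comm_cycle]
      exact Finset.sum_congr rfl fun _ _ => Finset.sum_comm)

theorem IsMatrixUnits.lift_single {E : ι → ι → A} (hE : IsMatrixUnits E) (φ : B →ₐ[R] A)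
    (hφ : ∀ p i j, Commute (φ p) (E i j)) (i j : ι) (p : B) :
    hE.lift φ hφ (Matrix.single i j p) = φ p * E i j := by
  simp [lift, Matrix.single_apply, apply_ite φ, ite_mul, ite_and]

theorem IsMatrixUnits.mem_range_lift {E : ι → ι → A} (hE : IsMatrixUnits E) (φ : B →ₐ[R] A)
    (hφ : ∀ p i j, Commute (φ p) (E i j)) (i j : ι) : E i j ∈ (hE.lift φ hφ).range :=
  (AlgHom.mem_range _).2 ⟨Matrix.single i j 1, by rw [hE.lift_single, map_one, one_mul]⟩

theorem IsMatrixUnits.range_le_range_lift {E : ι → ι → A} (hE : IsMatrixUnits E) (φ : B →ₐ[R] A)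
    (hφ : ∀ p i j, Commute (φ p) (E i j)) : φ.range ≤ (hE.lift φ hφ).range := by
  intro x hx
  obtain ⟨p, rfl⟩ := (AlgHom.mem_range φ).1 hx
  rw [← mul_one (φ p), ← hE.sum_diag, Finset.mul_sum]
  exact sum_mem fun i _ => (AlgHom.mem_range _).2 ⟨Matrix.single i i p, hE.lift_single φ hφ i i p⟩

end MatrixUnits

section CAR

variable {R A B : Type*} [CommRing R] [Ring A] [Algebra R A] [Ring B] [Algebra R B]
  {a b x : A} {t u : R}

/-- A pair of elements satisfying the canonical anticommutation relations. -/
structure IsCARPair (a b : A) : Prop where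
  left_sq : a * a = 0
  right_sq : b * b = 0
  anticomm : a * b + b * a = 1

/-- The element acting as `1` on the image of the idempotent `a * b` and as `-t` on that of the
complementary idempotent `b * a`, for a pair satisfying the canonical anticommutation relations.
Multiplication by it turns elements that commute with `a` and `b` up to the factor `-t` into
elements that commute with `a` and `b`. -/
def carTwist (t : R) (a b : A) : A := a * b - t • (b * a)

namespace IsCARPair

theorem symm (h : IsCARPair a b) : IsCARPair b a :=
  ⟨h.right_sq, h.left_sq, (add_comm _ _).trans h.anticomm⟩

theorem mul_mul_cancel (h : IsCARPair a b) : a * b * a = a := by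
  rw [eq_sub_of_add_eq h.anticomm, sub_mul, mul_assoc, h.left_sq, mul_zero, sub_zero, one_mul]

theorem isMatrixUnits (h : IsCARPair a b) : IsMatrixUnits !![a * b, a; b, b * a] where
  mul_eq i j k l := by
    have haba : a * (b * a) = a := by rw [← mul_assoc, h.mul_mul_cancel]
    have hbab : b * (a * b) = b := by rw [← mul_assoc, h.symm.mul_mul_cancel]
    have haa (y : A) : a * (a * y) = 0 := by rw [← mul_assoc, h.left_sq, zero_mul]
    have hbb (y : A) : b * (b * y) = 0 := by rw [← mul_assoc, h.right_sq, zero_mul]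
    fin_cases i <;> fin_cases j <;> fin_cases k <;> fin_cases l <;>
      simp [mul_assoc, haba, hbab, haa, hbb, h.left_sq, h.right_sq]
  sum_diag := by simpa using h.anticomm

theorem exists_matrix_algHom (h : IsCARPair a b) (φ : B →ₐ[R] A) (ha : ∀ p, Commute (φ p) a)
    (hb : ∀ p, Commute (φ p) b) :
    ∃ f : Matrix (Fin 2) (Fin 2) B →ₐ[R] A, a ∈ f.range ∧ b ∈ f.range ∧ φ.range ≤ f.range := by
  have hcomm (p : B) (i j : Fin 2) : Commute (φ p) (!![a * b, a; b, b * a] i j) := by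
    fin_cases i <;> fin_cases j
    exacts [(ha p).mul_right (hb p), ha p, hb p, (hb p).mul_right (ha p)]
  exact ⟨h.isMatrixUnits.lift φ hcomm, h.isMatrixUnits.mem_range_lift φ hcomm 0 1,
    h.isMatrixUnits.mem_range_lift φ hcomm 1 0, h.isMatrixUnits.range_le_range_lift φ hcomm⟩

theorem carTwist_mul_left (h : IsCARPair a b) : carTwist t a b * a = a := by
  rw [carTwist, sub_mul, h.mul_mul_cancel, smul_mul_assoc, mul_assoc, h.left_sq, mul_zero,
    smul_zero, sub_zero]

theorem left_mul_carTwist (h : IsCARPair a b) : a * carTwist t a b = (-t) • a := by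
  rw [carTwist, mul_sub, mul_smul_comm, ← mul_assoc, ← mul_assoc, h.left_sq, zero_mul, zero_sub,
    h.mul_mul_cancel, neg_smul]

theorem carTwist_mul_right (h : IsCARPair a b) : carTwist t a b * b = (-t) • b := by
  rw [carTwist, sub_mul, smul_mul_assoc, h.symm.mul_mul_cancel, mul_assoc, h.right_sq, mul_zero,
    zero_sub, neg_smul]

theorem right_mul_carTwist (h : IsCARPair a b) : b * carTwist t a b = b := by
  rw [carTwist, mul_sub, mul_smul_comm, ← mul_assoc, ← mul_assoc, h.right_sq, zero_mul, smul_zero,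
    sub_zero, h.symm.mul_mul_cancel]

theorem carTwist_mul_carTwist (h : IsCARPair a b) :
    carTwist t a b * carTwist u a b = a * b + (t * u) • (b * a) := by
  nth_rewrite 2 [carTwist]
  rw [mul_sub, mul_smul_comm, ← mul_assoc, ← mul_assoc, h.carTwist_mul_left, h.carTwist_mul_right]
  simp only [smul_mul_assoc]
  module

theorem carTwist_mul_carTwist_of_mul_eq_one (h : IsCARPair a b) (htu : t * u = 1) :
    carTwist t a b * carTwist u a b = 1 := by
  rw [h.carTwist_mul_carTwist, htu, one_smul, h.anticomm]

theorem carTwist_sq_mul (h : IsCARPair a b) :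
    carTwist t a b * carTwist t a b * (((t ^ 2 - 1) * u) • (a * b) + algebraMap R A u) =
      algebraMap R A (t ^ 2 * u) := by
  have hright : carTwist t a b * carTwist t a b * (a * b) = a * b := by
    rw [mul_assoc, ← mul_assoc _ a, h.carTwist_mul_left, ← mul_assoc, h.carTwist_mul_left]
  rw [mul_add, mul_smul_comm, hright, h.carTwist_mul_carTwist,
    Algebra.algebraMap_eq_smul_one, Algebra.algebraMap_eq_smul_one, mul_smul_comm, mul_one,
    ← h.anticomm]
  module

theorem commute_carTwist (h : IsCARPair a b) (hxa : x * a = (-t) • (a * x))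
    (hbx : b * x = (-t) • (x * b)) : Commute (carTwist u a b) x := by
  have hab : Commute (a * b) x := by
    rw [commute_iff_eq, mul_assoc, hbx, mul_smul_comm, ← mul_assoc, ← mul_assoc, hxa,
      smul_mul_assoc]
  have hba : Commute (b * a) x := by
    rw [eq_sub_of_add_eq' h.anticomm]
    exact (Commute.one_left x).sub_left hab
  exact hab.sub_left (hba.smul_left u)

theorem commute_left_carTwist_mul (h : IsCARPair a b) (hxa : x * a = (-t) • (a * x)) :
    Commute a (carTwist t a b * x) := by
  rw [commute_iff_eq, ← mul_assoc, h.left_mul_carTwist, mul_assoc, hxa, mul_smul_comm, ← mul_assoc,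
    h.carTwist_mul_left, smul_mul_assoc]

theorem commute_right_carTwist_mul (h : IsCARPair a b) (hxa : x * a = (-t) • (a * x))
    (hbx : b * x = (-t) • (x * b)) : Commute b (carTwist t a b * x) := by
  rw [commute_iff_eq, ← mul_assoc, h.right_mul_carTwist, (h.commute_carTwist hxa hbx).eq, mul_assoc,
    h.carTwist_mul_right, hbx, mul_smul_comm]

end IsCARPair

end CAR

section Families

variable {N : ℕ} {q c : ℂ} {A : Type*} [Ring A] [Algebra ℂ A]

/-- The value of `pairSum` on a family of elements of an algebra in place of the generators. -/
def pairing (q : ℂ) (x : Fin N → A) (i : Fin N) : A :=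
  ∑ k ∈ Finset.Iio i, (q ^ (2 * (k.val : ℤ) - 2 * (i.val : ℤ) + 2)) • (x k * x (dual k))

/-- The constant term of the relation `Rel.pair` at the index `i`. -/
def pairScalar (q c : ℂ) (i : Fin N) : ℂ :=
  c ^ 2 * q ^ ((N : ℤ) - 2 * (i.val : ℤ) - 1) * (q + q⁻¹)

/-- Families satisfying the relations `Rel N q c`; by `IsCliffordFamily.lift` they are the images
of the generators under the algebra homomorphisms out of `Cl N q c`. -/
structure IsCliffordFamily (q c : ℂ) (x : Fin N → A) : Prop where
  sq : ∀ i : Fin N, 2 * i.val + 1 ≠ N → x i * x i = 0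
  swap : ∀ i j : Fin N, i < j → i.val + j.val + 1 ≠ N → x j * x i = (-(q ^ 2)) • (x i * x j)
  pair : ∀ i : Fin N, 2 * i.val + 1 < N → x i * x (dual i) + x (dual i) * x i =
    (q ^ 2 - q⁻¹ ^ 2) • pairing q x i + algebraMap ℂ A (pairScalar q c i)
  middle : ∀ i : Fin N, 2 * i.val + 1 = N →
    x i * x i = (q - q⁻¹) • pairing q x i + algebraMap ℂ A (c ^ 2)

theorem map_pairSum (f : FreeAlgebra ℂ (Fin N) →ₐ[ℂ] A) (i : Fin N) :
    f (pairSum N q i) = pairing q (fun k => f (gen k)) i := by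
  simp only [pairSum, pairing, map_sum, map_smul, map_mul]

theorem isCliffordFamily_gen_iff (f : FreeAlgebra ℂ (Fin N) →ₐ[ℂ] A) :
    IsCliffordFamily q c (fun i => f (gen i)) ↔ ∀ ⦃u v⦄, Rel N q c u v → f u = f v := by
  constructor
  · rintro h _ _ (⟨i, hi⟩ | ⟨i, j, hlt, hij⟩ | ⟨i, hi⟩ | ⟨i, hi⟩)
    · rw [map_mul, map_zero, h.sq i hi]
    · rw [map_mul, map_smul, map_mul, h.swap i j hlt hij]
    · simp only [map_add, map_neg, map_mul, map_smul, AlgHom.commutes, map_pairSum]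
      rw [add_assoc, eq_neg_add_iff_add_eq, h.pair i hi]
      simp only [pairScalar, map_mul, map_add]
    · simp only [map_add, map_mul, map_smul, AlgHom.commutes, map_pairSum, h.middle i hi]
  · intro h
    refine ⟨fun i hi => ?_, fun i j hlt hij => ?_, fun i hi => ?_, fun i hi => ?_⟩
    · simpa only [map_mul, map_zero] using h (Rel.sq i hi)
    · simpa only [map_mul, map_smul] using h (Rel.swap i j hlt hij)
    · have hrel := h (Rel.pair i hi)
      simp only [map_add, map_neg, map_mul, map_smul, AlgHom.commutes, map_pairSum] at hrel
      rw [add_assoc, eq_neg_add_iff_add_eq] at hrel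
      simpa only [pairScalar, map_mul, map_add] using hrel
    · simpa only [map_add, map_mul, map_smul, AlgHom.commutes, map_pairSum]
        using h (Rel.middle i hi)

theorem isCliffordFamily_γ : IsCliffordFamily q c (γ N q c) :=
  (isCliffordFamily_gen_iff (RingQuot.mkAlgHom ℂ (Rel N q c))).2
    fun _ _ huv => RingQuot.mkAlgHom_rel ℂ huv

/-- The algebra homomorphism out of `Cl N q c` sending the generators to a given family. -/
def IsCliffordFamily.lift {x : Fin N → A} (h : IsCliffordFamily q c x) : Cl N q c →ₐ[ℂ] A :=
  RingQuot.liftAlgHom ℂ ⟨FreeAlgebra.lift ℂ x, (isCliffordFamily_gen_iff _).1 <| by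
    simpa only [gen, FreeAlgebra.lift_ι_apply] using h⟩

theorem IsCliffordFamily.lift_γ {x : Fin N → A} (h : IsCliffordFamily q c x) (i : Fin N) :
    h.lift (γ N q c i) = x i := by
  rw [lift, γ, RingQuot.liftAlgHom_mkAlgHom_apply, gen, FreeAlgebra.lift_ι_apply]

theorem range_le_of_forall_γ_mem (f : Cl N q c →ₐ[ℂ] A) (S : Subalgebra ℂ A)
    (hS : ∀ i, f (γ N q c i) ∈ S) : f.range ≤ S := by
  have htop : ⊤ ≤ S.comap (f.comp (RingQuot.mkAlgHom ℂ (Rel N q c))) := by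
    rw [← FreeAlgebra.adjoin_range_ι, Algebra.adjoin_le_iff]
    rintro _ ⟨i, rfl⟩
    exact hS i
  rintro _ ⟨x, rfl⟩
  obtain ⟨z, rfl⟩ := RingQuot.mkAlgHom_surjective ℂ (Rel N q c) x
  exact htop (Algebra.mem_top (x := z))

end Families

section InnerIndex

variable {N : ℕ}

/-- The inclusion of the indices strictly between the first and the last one. -/
def innerIndex (j : Fin N) : Fin (N + 2) := j.castSucc.succ

@[simp] theorem innerIndex_val (j : Fin N) : (innerIndex j).val = j.val + 1 := rfl

theorem dual_innerIndex (j : Fin N) : dual (innerIndex j) = innerIndex (dual j) := by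
  ext
  simp only [dual, innerIndex_val]
  omega

theorem dual_zero : dual (0 : Fin (N + 2)) = Fin.last (N + 1) := rfl

theorem sum_Iio_innerIndex {M : Type*} [AddCommMonoid M] (f : Fin (N + 2) → M) (i : Fin N) :
    ∑ k ∈ Finset.Iio (innerIndex i), f k = f 0 + ∑ k ∈ Finset.Iio i, f (innerIndex k) := by
  simp only [← Finset.filter_gt_eq_Iio, Finset.sum_filter]
  rw [Fin.sum_univ_succ, Fin.sum_univ_castSucc]
  have hlast : ¬ Fin.last (N + 1) < i.castSucc.succ := (Fin.le_last _).not_gt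
  simp [innerIndex, hlast]

@[elab_as_elim]
theorem innerIndex_cases {P : Fin (N + 2) → Prop} (zero : P 0) (last : P (Fin.last (N + 1)))
    (inner : ∀ j, P (innerIndex j)) (i : Fin (N + 2)) : P i :=
  Fin.cases zero (Fin.lastCases last inner) i

end InnerIndex

section Reduction

variable {N : ℕ} {q c : ℂ} {A : Type*} [Ring A] [Algebra ℂ A]

theorem pairing_innerIndex (x : Fin (N + 2) → A) (i : Fin N) :
    pairing q x (innerIndex i) = q ^ (-2 * (i.val : ℤ)) • (x 0 * x (Fin.last (N + 1))) +
      pairing q (fun k => x (innerIndex k)) i := by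
  have hexp (m : ℤ) : 2 * (m + 1) - 2 * ((i.val : ℤ) + 1) + 2 = 2 * m - 2 * i.val + 2 := by ring
  have hexp_zero : 2 * (0 : ℤ) - 2 * ((i.val : ℤ) + 1) + 2 = -2 * i.val := by ring
  rw [pairing, sum_Iio_innerIndex, pairing]
  simp only [dual_zero, dual_innerIndex, innerIndex_val, Fin.val_zero, Nat.cast_zero,
    Nat.cast_add, Nat.cast_one, hexp, hexp_zero]

theorem pairing_mul_left {d : A} {x : Fin N → A} (hd : ∀ k, Commute d (x k)) (i : Fin N) :
    pairing q (fun k => d * x k) i = d * d * pairing q x i := by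
  simp only [pairing, Finset.mul_sum, mul_smul_comm, (hd _).symm.mul_mul_mul_comm]

theorem pairScalar_innerIndex (i : Fin N) : pairScalar q c (innerIndex i) = pairScalar q c i := by
  simp only [pairScalar, innerIndex_val]
  congr 3
  push_cast
  ring

theorem pairScalar_mul_sq (i : Fin N) :
    pairScalar q (c * q ^ 2) i = (q ^ 2) ^ 2 * pairScalar q c i := by
  simp only [pairScalar]
  ring

theorem zpow_mul_pairScalar_zero (hq : q ≠ 0) (i : Fin N) :
    q ^ (-2 * (i.val : ℤ)) * pairScalar q c (0 : Fin (N + 2)) = q ^ 2 * pairScalar q c i := by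
  have hpow : q ^ (-2 * (i.val : ℤ)) * q ^ ((N : ℤ) + 1) =
      q ^ 2 * q ^ ((N : ℤ) - 2 * (i.val : ℤ) - 1) := by
    rw [← zpow_natCast q 2, ← zpow_add₀ hq, ← zpow_add₀ hq]
    congr 1
    push_cast
    ring
  have hexp : ((N + 2 : ℕ) : ℤ) - 2 * (((0 : Fin (N + 2)).val : ℕ) : ℤ) - 1 = N + 1 := by
    rw [Fin.val_zero]
    push_cast
    ring
  rw [pairScalar, hexp, pairScalar]
  linear_combination c ^ 2 * (q + q⁻¹) * hpow

theorem pairScalar_ne_zero (hq : q ≠ 0) (hq2 : q ^ 2 ≠ -1) (hc : c ≠ 0) (i : Fin N) :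
    pairScalar q c i ≠ 0 := by
  have hsum : q + q⁻¹ ≠ 0 := fun h => hq2 <| by
    field_simp at h
    linear_combination h
  exact mul_ne_zero (mul_ne_zero (pow_ne_zero 2 hc) (zpow_ne_zero _ hq)) hsum

namespace IsCliffordFamily

variable {x : Fin (N + 2) → A}

theorem outer_anticomm (h : IsCliffordFamily q c x) :
    x 0 * x (Fin.last (N + 1)) + x (Fin.last (N + 1)) * x 0 =
      algebraMap ℂ A (pairScalar q c (0 : Fin (N + 2))) := by
  have hpair := h.pair 0 (by simp)
  have hsum : pairing q x 0 = 0 := Finset.sum_eq_zero fun k hk => by simp at hk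
  rwa [dual_zero, hsum, smul_zero, zero_add] at hpair

theorem innerIndex_mul_zero (h : IsCliffordFamily q c x) (j : Fin N) :
    x (innerIndex j) * x 0 = (-(q ^ 2)) • (x 0 * x (innerIndex j)) :=
  h.swap _ _ (Fin.succ_pos _) (by simp; omega)

theorem last_mul_innerIndex (h : IsCliffordFamily q c x) (j : Fin N) :
    x (Fin.last (N + 1)) * x (innerIndex j) =
      (-(q ^ 2)) • (x (innerIndex j) * x (Fin.last (N + 1))) :=
  h.swap _ _ (by simp [Fin.lt_def]) (by simp)

end IsCliffordFamily

/-- The last member of a family, normalised so as to form with the first one a pair satisfying the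
canonical anticommutation relations. -/
def outerDual (q c : ℂ) (x : Fin (N + 2) → A) : A :=
  (pairScalar q c (0 : Fin (N + 2)))⁻¹ • x (Fin.last (N + 1))

/-- The inner members of a family, multiplied by the element that makes them commute with the two
outer ones. -/
def innerTwist (q c : ℂ) (x : Fin (N + 2) → A) (j : Fin N) : A :=
  carTwist (q ^ 2) (x 0) (outerDual q c x) * x (innerIndex j)

namespace IsCliffordFamily

variable {x : Fin (N + 2) → A}

theorem outerDual_mul_innerIndex (h : IsCliffordFamily q c x) (j : Fin N) :
    outerDual q c x * x (innerIndex j) = (-(q ^ 2)) • (x (innerIndex j) * outerDual q c x) := by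
  rw [outerDual, smul_mul_assoc, h.last_mul_innerIndex, mul_smul_comm, smul_comm]

theorem isCARPair (h : IsCliffordFamily q c x) (hs : pairScalar q c (0 : Fin (N + 2)) ≠ 0) :
    IsCARPair (x 0) (outerDual q c x) where
  left_sq := h.sq 0 (by simp)
  right_sq := by
    rw [outerDual, smul_mul_smul_comm, h.sq (Fin.last _) (by rw [Fin.val_last]; omega), smul_zero]
  anticomm := by
    rw [outerDual, mul_smul_comm, smul_mul_assoc, ← smul_add, h.outer_anticomm,
      Algebra.algebraMap_eq_smul_one, smul_smul, inv_mul_cancel₀ hs, one_smul]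

theorem commute_zero_innerTwist (h : IsCliffordFamily q c x)
    (hs : pairScalar q c (0 : Fin (N + 2)) ≠ 0) (j : Fin N) :
    Commute (x 0) (innerTwist q c x j) :=
  (h.isCARPair hs).commute_left_carTwist_mul (h.innerIndex_mul_zero j)

theorem commute_outerDual_innerTwist (h : IsCliffordFamily q c x)
    (hs : pairScalar q c (0 : Fin (N + 2)) ≠ 0) (j : Fin N) :
    Commute (outerDual q c x) (innerTwist q c x j) :=
  (h.isCARPair hs).commute_right_carTwist_mul (h.innerIndex_mul_zero j)
    (h.outerDual_mul_innerIndex j)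

theorem commute_carTwist_innerIndex (h : IsCliffordFamily q c x)
    (hs : pairScalar q c (0 : Fin (N + 2)) ≠ 0) (j : Fin N) :
    Commute (carTwist (q ^ 2) (x 0) (outerDual q c x)) (x (innerIndex j)) :=
  (h.isCARPair hs).commute_carTwist (h.innerIndex_mul_zero j) (h.outerDual_mul_innerIndex j)

theorem innerTwist_mul_innerTwist (h : IsCliffordFamily q c x)
    (hs : pairScalar q c (0 : Fin (N + 2)) ≠ 0) (i j : Fin N) :
    innerTwist q c x i * innerTwist q c x j =
      carTwist (q ^ 2) (x 0) (outerDual q c x) * carTwist (q ^ 2) (x 0) (outerDual q c x) *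
        (x (innerIndex i) * x (innerIndex j)) :=
  (h.commute_carTwist_innerIndex hs i).symm.mul_mul_mul_comm _ _

-- The twist squares to `e + q⁴(1 - e)` for the idempotent `e = x 0 * outerDual q c x`, so that
-- the term `k = 0` of `pairing q x (innerIndex i)`, a multiple of `e`, joins the constant term.
theorem carTwist_sq_mul_pairing_add (h : IsCliffordFamily q c x) (hq : q ≠ 0)
    (hs : pairScalar q c (0 : Fin (N + 2)) ≠ 0) (i : Fin N) {r t : ℂ}
    (hrt : r * (q ^ 2 * pairScalar q c i) = ((q ^ 2) ^ 2 - 1) * t) :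
    carTwist (q ^ 2) (x 0) (outerDual q c x) * carTwist (q ^ 2) (x 0) (outerDual q c x) *
        (r • pairing q x (innerIndex i) + algebraMap ℂ A t) =
      r • pairing q (innerTwist q c x) i + algebraMap ℂ A ((q ^ 2) ^ 2 * t) := by
  have houter : x 0 * x (Fin.last (N + 1)) =
      pairScalar q c (0 : Fin (N + 2)) • (x 0 * outerDual q c x) := by
    rw [outerDual, mul_smul_comm, smul_smul, mul_inv_cancel₀ hs, one_smul]
  have hinner : pairing q (innerTwist q c x) i = _ :=
    pairing_mul_left (h.commute_carTwist_innerIndex hs) i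
  rw [pairing_innerIndex, houter, smul_smul, zpow_mul_pairScalar_zero hq, smul_add, smul_smul, hrt,
    add_right_comm, mul_add, (h.isCARPair hs).carTwist_sq_mul, mul_smul_comm, hinner, add_comm]

theorem isCliffordFamily_innerTwist (h : IsCliffordFamily q c x) (hq : q ≠ 0)
    (hs : pairScalar q c (0 : Fin (N + 2)) ≠ 0) :
    IsCliffordFamily q (c * q ^ 2) (innerTwist q c x) where
  sq i hi := by
    rw [h.innerTwist_mul_innerTwist hs, h.sq (innerIndex i) (by rw [innerIndex_val]; omega),
      mul_zero]
  swap i j hlt hij := by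
    rw [h.innerTwist_mul_innerTwist hs, h.innerTwist_mul_innerTwist hs,
      h.swap (innerIndex i) (innerIndex j)
        (Fin.succ_lt_succ_iff.2 (Fin.castSucc_lt_castSucc_iff.2 hlt))
        (by simp only [innerIndex_val]; omega), mul_smul_comm]
  pair i hi := by
    have hr : (q ^ 2 - q⁻¹ ^ 2) * (q ^ 2 * pairScalar q c i) =
        ((q ^ 2) ^ 2 - 1) * pairScalar q c i := by field_simp
    rw [h.innerTwist_mul_innerTwist hs, h.innerTwist_mul_innerTwist hs, ← mul_add,
      ← dual_innerIndex, h.pair (innerIndex i) (by rw [innerIndex_val]; omega),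
      pairScalar_innerIndex, h.carTwist_sq_mul_pairing_add hq hs i hr, pairScalar_mul_sq]
  middle i hi := by
    have hexp : (N : ℤ) - 2 * i.val - 1 = 0 := by omega
    have hr : (q - q⁻¹) * (q ^ 2 * pairScalar q c i) = ((q ^ 2) ^ 2 - 1) * c ^ 2 := by
      rw [pairScalar, hexp, zpow_zero]
      field_simp
      ring
    rw [h.innerTwist_mul_innerTwist hs, h.middle (innerIndex i) (by rw [innerIndex_val]; omega),
      h.carTwist_sq_mul_pairing_add hq hs i hr, mul_pow, mul_comm (c ^ 2)]

end IsCliffordFamily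

end Reduction

section Simplicity

variable {N : ℕ} {q c : ℂ}

theorem IsCliffordFamily.mem_of_innerTwist_mem {A : Type*} [Ring A] [Algebra ℂ A]
    {x : Fin (N + 2) → A} (h : IsCliffordFamily q c x) (hq : q ≠ 0)
    (hs : pairScalar q c (0 : Fin (N + 2)) ≠ 0) {S : Subalgebra ℂ A} (hzero : x 0 ∈ S)
    (hdual : outerDual q c x ∈ S) (hinner : ∀ j, innerTwist q c x j ∈ S) (i : Fin (N + 2)) :
    x i ∈ S := by
  induction i using innerIndex_cases with
  | zero => exact hzero
  | last =>
    rw [← one_smul ℂ (x (Fin.last _)), ← mul_inv_cancel₀ hs, mul_smul]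
    exact S.smul_mem hdual _
  | inner j =>
    have hinv : q⁻¹ ^ 2 * q ^ 2 = 1 := by rw [← mul_pow, inv_mul_cancel₀ hq, one_pow]
    rw [← one_mul (x (innerIndex j)),
      ← (h.isCARPair hs).carTwist_mul_carTwist_of_mul_eq_one hinv, mul_assoc]
    exact S.mul_mem (S.sub_mem (S.mul_mem hzero hdual) (S.smul_mem (S.mul_mem hdual hzero) _))
      (hinner j)

theorem exists_surjective_matrix_algHom (hq : q ≠ 0) (hs : pairScalar q c (0 : Fin (N + 2)) ≠ 0) :
    ∃ f : Matrix (Fin 2) (Fin 2) (Cl N q (c * q ^ 2)) →ₐ[ℂ] Cl (N + 2) q c,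
      Function.Surjective f := by
  have hγ : IsCliffordFamily q c (γ (N + 2) q c) := isCliffordFamily_γ
  have htwist := hγ.isCliffordFamily_innerTwist hq hs
  have hcentral : htwist.lift.range ≤
      Subalgebra.centralizer ℂ {γ (N + 2) q c 0, outerDual q c (γ (N + 2) q c)} := by
    refine range_le_of_forall_γ_mem _ _ fun j => Subalgebra.mem_centralizer_iff ℂ |>.2 ?_
    rw [htwist.lift_γ]
    rintro _ (rfl | rfl)
    · exact hγ.commute_zero_innerTwist hs j
    · exact hγ.commute_outerDual_innerTwist hs j
  have hcomm (p : Cl N q (c * q ^ 2)) := Subalgebra.mem_centralizer_iff ℂ |>.1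
    (hcentral ((AlgHom.mem_range _).2 ⟨p, rfl⟩))
  obtain ⟨f, hzero, hdual, hinner⟩ := (hγ.isCARPair hs).exists_matrix_algHom htwist.lift
    (fun p => (hcomm p _ (Or.inl rfl)).symm) (fun p => (hcomm p _ (Or.inr rfl)).symm)
  have hrange : (AlgHom.id ℂ (Cl (N + 2) q c)).range ≤ f.range :=
    range_le_of_forall_γ_mem _ _ <| hγ.mem_of_innerTwist_mem hq hs hzero hdual fun j =>
      hinner ((AlgHom.mem_range _).2 ⟨γ N q (c * q ^ 2) j, htwist.lift_γ j⟩)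
  exact ⟨f, fun x => (AlgHom.mem_range f).1 (hrange ((AlgHom.mem_range _).2 ⟨x, rfl⟩))⟩

theorem cl_add_two_eq_bot_or_eq_top (hq : q ≠ 0) (hs : pairScalar q c (0 : Fin (N + 2)) ≠ 0)
    (hN : ∀ I : TwoSidedIdeal (Cl N q (c * q ^ 2)), I = ⊥ ∨ I = ⊤)
    (J : TwoSidedIdeal (Cl (N + 2) q c)) : J = ⊥ ∨ J = ⊤ := by
  obtain ⟨f, hf⟩ := exists_surjective_matrix_algHom hq hs
  exact eq_bot_or_eq_top_of_surjective f.toRingHom hf (matrix_eq_bot_or_eq_top (Fin 2) hN) J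

theorem cl_zero_eq_bot_or_eq_top (q c : ℂ) (I : TwoSidedIdeal (Cl 0 q c)) : I = ⊥ ∨ I = ⊤ := by
  have hsurj : Function.Surjective (Algebra.ofId ℂ (Cl 0 q c)) := fun x => by
    have hrange := range_le_of_forall_γ_mem (AlgHom.id ℂ (Cl 0 q c))
      (Algebra.ofId ℂ (Cl 0 q c)).range fun i => i.elim0
    exact hrange ⟨x, rfl⟩
  exact eq_bot_or_eq_top_of_surjective (Algebra.ofId ℂ (Cl 0 q c)).toRingHom hsurj
    eq_bot_or_eq_top I

end Simplicity

theorem even_clifford_simple_general (n : ℕ) (q c : ℂ) (hq : q ≠ 0) (hq2 : q ^ 2 ≠ -1)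
    (hc : c ≠ 0) : ∀ I : TwoSidedIdeal (Cl (2 * n) q c), I = ⊥ ∨ I = ⊤ := by
  induction n generalizing c with
  | zero => exact cl_zero_eq_bot_or_eq_top q c
  | succ n ih =>
    exact cl_add_two_eq_bot_or_eq_top hq (pairScalar_ne_zero hq hq2 hc 0)
      (ih (c * q ^ 2) (mul_ne_zero hc (pow_ne_zero 2 hq)))

/-- for even `N = 2n`, `Cl_{2n}(q,c)` is simple: its only two-sided ideals
are `{0}` and the whole algebra. -/
theorem even_clifford_simple (n : ℕ) (hn : 2 ≤ n) (q c : ℂ)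
    (hq : q ≠ 0) (hqr : ∀ m : ℕ, 0 < m → q ^ m ≠ 1) (hc : c ≠ 0) :
    ∀ I : TwoSidedIdeal (Cl (2 * n) q c), I = ⊥ ∨ I = ⊤ := by
  have hq2 : q ^ 2 ≠ -1 := fun h => hqr 4 (by norm_num) (by linear_combination (q ^ 2 - 1) * h)
  exact even_clifford_simple_general n q c hq hq2 hc

end FRT
end
end

section
/- The left ideal I_L^ν := Cl_N(q,c)·φ_N^ν is a minimal left ideal of Cl_N(q,c), and the set {γ_1^{i_1}γ_2^{i_2}⋯γ_n^{i_n} φ_N^ν : i_j ∈ {0,1}} is a vector space basis of I_L^ν; in particular dim I_L^ν = 2^n. -/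
noncomputable section

namespace FRT

/-!
`Cl_N(q,c)` acts on the `2^n`-dimensional space of functions on `{0,1}^n`: the lower generators
`γ_i` create, the upper ones `γ_{i'}` annihilate, each `q`-deformed by a string of factors `-q²`,
and the sums in the relations telescope. An invariant subspace contains a vector killed by all
annihilators, hence the vacuum, hence everything, so this spin representation is irreducible.

In the algebra, the annihilators kill `φ` and the middle generator acts on it by a scalar. The
relations let any generator be moved through `γ_1^{i_1} ⋯ γ_n^{i_n}` towards `φ`, so the `2^n`
elements `γ_1^{i_1} ⋯ γ_n^{i_n} φ` span `Cl_N(q,c) φ`. If `φ` acts nontrivially on some spinor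
`w`, then `x ↦ x w` maps `Cl_N(q,c) φ` onto the spin representation; counting dimensions, it is an
isomorphism, which gives linear independence and minimality at once.
-/

section Fock

open Finset Function

variable {n : ℕ} {R : Type*} [CommRing R]

/-- The weight `∏_{k < m} s^{f_k}` of an occupation pattern `f`: the `q`-analogue, with parameter
`s`, of the sign string that makes fermionic ladder operators anticommute. -/
def weight (s : R) (f : Fin n → Bool) (m : ℕ) : R :=
  ∏ k : Fin n with k.val < m, if f k then s else 1

lemma weight_zero (s : R) (f : Fin n → Bool) : weight s f 0 = 1 := by simp [weight]

lemma weight_succ (s : R) (f : Fin n → Bool) (i : Fin n) :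
    weight s f (i + 1) = weight s f i * if f i then s else 1 := by
  have hfilter : (univ.filter fun k : Fin n => k.val < i + 1) =
      insert i (univ.filter fun k : Fin n => k.val < i) := by
    grind
  rw [weight, hfilter, prod_insert (by simp), mul_comm, weight]

lemma weight_update_of_le (s : R) (f : Fin n → Bool) (b : Bool) {i : Fin n} {m : ℕ}
    (h : m ≤ i) : weight s (update f i b) m = weight s f m :=
  prod_congr rfl fun k hk => by
    have hki : k ≠ i := by
      rintro rfl
      exact ((mem_filter.1 hk).2.trans_le h).false
    rw [update_of_ne hki]

lemma weight_update_true (s : R) (f : Fin n → Bool) {i : Fin n} {m : ℕ} (h : i < m) :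
    weight s (update f i true) m = s * weight s (update f i false) m := by
  have hfactor (k : Fin n) : (if update f i true k then s else 1) =
      (if k = i then s else 1) * if update f i false k then s else 1 := by
    by_cases hk : k = i <;> simp [hk]
  simp only [weight, hfactor, prod_mul_distrib]
  simp [h]

lemma weight_eq_mul_weight_update_false (s : R) {f : Fin n → Bool} {i : Fin n} {m : ℕ}
    (h : i < m) (hf : f i = true) : weight s f m = s * weight s (update f i false) m := by
  rw [← weight_update_true s f h, ← hf, update_eq_self]

lemma weight_update_true_eq_mul_weight (s : R) {f : Fin n → Bool} {i : Fin n} {m : ℕ}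
    (h : i < m) (hf : f i = false) : weight s (update f i true) m = s * weight s f m := by
  rw [weight_update_true s f h, ← hf, update_eq_self]

/-- The `i`-th creation (`b = true`) or annihilation (`b = false`) operator, `q`-deformed by the
weight string. States are functions of the occupation pattern, so creation is supported on the
patterns in which `i` is occupied. -/
def ladder (s : R) (b : Bool) (i : Fin n) : Module.End R ((Fin n → Bool) → R) where
  toFun v f := if f i = b then weight s f i * v (update f i !b) else 0
  map_add' u v := by ext f; simp [mul_add, ite_add_ite]
  map_smul' a v := by ext f; simp [mul_left_comm]

/-- The diagonal operator whose eigenvalues are the weights of the first `m` sites. -/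
def weightOp (s : R) (m : ℕ) : Module.End R ((Fin n → Bool) → R) :=
  LinearMap.mulLeft R fun f => weight s f m

lemma ladder_apply (s : R) (b : Bool) (i : Fin n) (v : (Fin n → Bool) → R) (f : Fin n → Bool) :
    ladder s b i v f = if f i = b then weight s f i * v (update f i !b) else 0 := rfl

lemma weightOp_apply (s : R) (m : ℕ) (v : (Fin n → Bool) → R) (f : Fin n → Bool) :
    weightOp s m v f = weight s f m * v f := rfl

lemma weightOp_zero (s : R) : (weightOp s 0 : Module.End R ((Fin n → Bool) → R)) = 1 := by
  ext1 v
  ext f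
  simp [weightOp_apply, weight_zero]

lemma ladder_mul_self (s : R) (b : Bool) (i : Fin n) : ladder s b i * ladder s b i = 0 := by
  ext1 v
  ext f
  simp [ladder_apply]

lemma ladder_mul_ladder_true (s : R) (b : Bool) {i j : Fin n} (h : i < j) :
    ladder s b j * ladder s true i = s • (ladder s true i * ladder s b j) := by
  refine LinearMap.ext fun v => funext fun f => ?_
  simp only [Module.End.mul_apply, LinearMap.smul_apply, Pi.smul_apply, ladder_apply,
    update_of_ne h.ne, update_of_ne h.ne', weight_update_of_le s f _ (Fin.le_def.1 h.le),
    update_comm h.ne, smul_eq_mul]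
  split_ifs with hj hi
  · rw [weight_eq_mul_weight_update_false s h hi, Bool.not_true]
    ring
  all_goals ring

lemma ladder_false_mul_ladder (s : R) (b : Bool) {i j : Fin n} (h : i < j) :
    ladder s false i * ladder s b j = s • (ladder s b j * ladder s false i) := by
  refine LinearMap.ext fun v => funext fun f => ?_
  simp only [Module.End.mul_apply, LinearMap.smul_apply, Pi.smul_apply, ladder_apply,
    update_of_ne h.ne, update_of_ne h.ne', weight_update_of_le s f _ (Fin.le_def.1 h.le),
    update_comm h.ne, smul_eq_mul]
  split_ifs with hi hj
  · rw [Bool.not_false, weight_update_true_eq_mul_weight s h hi]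
    ring
  all_goals ring

lemma ladder_false_mul_ladder_true (s : R) {i j : Fin n} (h : i ≠ j) :
    ladder s false j * ladder s true i = s • (ladder s true i * ladder s false j) := by
  rcases h.lt_or_gt with hlt | hgt
  · exact ladder_mul_ladder_true s false hlt
  · exact ladder_false_mul_ladder s true hgt

lemma weightOp_mul_ladder_true (s : R) {i : Fin n} {m : ℕ} (h : i < m) :
    weightOp s m * ladder s true i = s • (ladder s true i * weightOp s m) := by
  refine LinearMap.ext fun v => funext fun f => ?_
  simp only [Module.End.mul_apply, LinearMap.smul_apply, Pi.smul_apply, ladder_apply,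
    weightOp_apply, smul_eq_mul]
  split_ifs with hi
  · rw [weight_eq_mul_weight_update_false s h hi, Bool.not_true]
    ring
  · ring

lemma ladder_false_mul_weightOp (s : R) {i : Fin n} {m : ℕ} (h : i < m) :
    ladder s false i * weightOp s m = s • (weightOp s m * ladder s false i) := by
  refine LinearMap.ext fun v => funext fun f => ?_
  simp only [Module.End.mul_apply, LinearMap.smul_apply, Pi.smul_apply, ladder_apply,
    weightOp_apply, smul_eq_mul]
  split_ifs with hi
  · rw [Bool.not_false, weight_update_true_eq_mul_weight s h hi]
    ring
  · ring

lemma ladder_mul_ladder_not_apply (s : R) (b : Bool) (i : Fin n) (v : (Fin n → Bool) → R)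
    (f : Fin n → Bool) :
    (ladder s b i * ladder s (!b) i) v f = if f i = b then weight s f i ^ 2 * v f else 0 := by
  simp only [Module.End.mul_apply, ladder_apply, update_self, update_idem, Bool.not_not,
    weight_update_of_le s f _ le_rfl, if_true]
  split_ifs with h
  · rw [← h, update_eq_self]
    ring
  · rfl

lemma ladder_anticommutator (s : R) (i : Fin n) :
    ladder s false i * ladder s true i + ladder s true i * ladder s false i =
      weightOp s i ^ 2 := by
  refine LinearMap.ext fun v => funext fun f => ?_
  have hfalse := ladder_mul_ladder_not_apply s false i v f
  have htrue := ladder_mul_ladder_not_apply s true i v f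
  rw [Bool.not_false] at hfalse
  rw [Bool.not_true] at htrue
  rw [LinearMap.add_apply, Pi.add_apply, hfalse, htrue]
  cases hi : f i <;> simp [pow_two, weightOp_apply, mul_assoc]

lemma smul_ladder_true_mul_ladder_false (s : R) (i : Fin n) :
    (s ^ 2 - 1) • (ladder s true i * ladder s false i) =
      weightOp s (i + 1) ^ 2 - weightOp s i ^ 2 := by
  refine LinearMap.ext fun v => funext fun f => ?_
  have htrue := ladder_mul_ladder_not_apply s true i v f
  rw [Bool.not_true] at htrue
  rw [LinearMap.smul_apply, Pi.smul_apply, htrue]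
  simp only [LinearMap.sub_apply, Pi.sub_apply, pow_two, Module.End.mul_apply, weightOp_apply,
    weight_succ, smul_eq_mul]
  split_ifs <;> ring

end Fock

section Irreducible

open Finset Function

variable {ι R V : Type*} [CommRing R] [AddCommGroup V] [Module R V]

lemma exists_mem_forall_apply_eq_zero (T : ι → Module.End R V) (hsq : ∀ i, T i * T i = 0)
    (hcomm : ∀ i j, ∃ a : R, T i * T j = a • (T j * T i)) {W : Submodule R V}
    (hW : ∀ i, ∀ v ∈ W, T i v ∈ W) (hne : W ≠ ⊥) (t : Finset ι) :
    ∃ v ∈ W, v ≠ 0 ∧ ∀ i ∈ t, T i v = 0 := by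
  classical
  induction t using Finset.induction_on with
  | empty => simpa using W.exists_mem_ne_zero_of_ne_bot hne
  | insert j t _ ih =>
    obtain ⟨v, hvW, hv, hvt⟩ := ih
    by_cases hj : T j v = 0
    · exact ⟨v, hvW, hv, by simpa [hj] using hvt⟩
    · refine ⟨T j v, hW j v hvW, hj, (forall_mem_insert _ _ _).2 ⟨?_, fun i hi => ?_⟩⟩
      · exact LinearMap.congr_fun (hsq j) v
      · obtain ⟨a, ha⟩ := hcomm i j
        simpa [hvt i hi] using LinearMap.congr_fun ha v

variable {n : ℕ} {K : Type*} [Field K] {s : K}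

lemma weight_ne_zero (hs : s ≠ 0) (f : Fin n → Bool) (m : ℕ) : weight s f m ≠ 0 :=
  prod_ne_zero_iff.2 fun k _ => by split_ifs <;> simp [hs]

lemma exists_ladder_false_mul_eq_smul (hs : s ≠ 0) (i j : Fin n) :
    ∃ a : K, ladder s false i * ladder s false j = a • (ladder s false j * ladder s false i) := by
  rcases lt_trichotomy i j with h | rfl | h
  · exact ⟨s, ladder_false_mul_ladder s false h⟩
  · exact ⟨1, (one_smul _ _).symm⟩
  · exact ⟨s⁻¹, by rw [ladder_false_mul_ladder s false h, inv_smul_smul₀ hs]⟩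

lemma eq_smul_single_of_ladder_false_eq_zero (hs : s ≠ 0) {v : (Fin n → Bool) → K}
    (hv : ∀ i, ladder s false i v = 0) :
    v = v (fun _ => false) • Pi.single (fun _ => false) 1 := by
  ext f
  by_cases hf : f = fun _ => false
  · simp [hf]
  · obtain ⟨i, hi⟩ := Function.ne_iff.1 hf
    have hfi : update f i true = f := by
      rw [← (by simpa using hi : f i = true), update_eq_self]
    have hvf := congrFun (hv i) (update f i false)
    simpa [ladder_apply, weight_ne_zero hs, hfi, hf] using hvf

lemma ladder_true_single (i : Fin n) {f : Fin n → Bool} (hf : f i = false) :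
    ladder s true i (Pi.single f 1) = weight s f i • Pi.single (update f i true) 1 := by
  ext g
  by_cases hg : g = update f i true
  · have hfi : update f i false = f := by rw [← hf, update_eq_self]
    simp [ladder_apply, hg, hfi, weight_update_of_le s f true le_rfl]
  · have hgi : g i = true → update g i false ≠ f := by
      rintro hgi rfl
      exact hg (by simp [← hgi])
    simpa [ladder_apply, hg] using fun h => Or.inr (Pi.single_eq_of_ne (hgi h) 1)

lemma single_mem_of_ladder_true_mem (hs : s ≠ 0) {W : Submodule K ((Fin n → Bool) → K)}
    (hW : ∀ i, ∀ v ∈ W, ladder s true i v ∈ W) (h0 : Pi.single (fun _ => false) 1 ∈ W)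
    (f : Fin n → Bool) : Pi.single f 1 ∈ W := by
  suffices h : ∀ t : Finset (Fin n), Pi.single (fun i => decide (i ∈ t)) 1 ∈ W by
    simpa using h {i | f i = true}
  intro t
  induction t using Finset.induction_on with
  | empty => simpa using h0
  | insert i t hi ih =>
    have hupdate : (fun j => decide (j ∈ insert i t)) =
        update (fun j => decide (j ∈ t)) i true := by
      ext j
      by_cases hj : j = i <;> simp [hj]
    have hmem := hW i _ ih
    rwa [ladder_true_single i (by simpa using hi),
      Submodule.smul_mem_iff _ (weight_ne_zero hs _ _), ← hupdate] at hmem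

lemma eq_bot_or_eq_top_of_ladder_mem (hs : s ≠ 0) {W : Submodule K ((Fin n → Bool) → K)}
    (hW : ∀ b i, ∀ v ∈ W, ladder s b i v ∈ W) : W = ⊥ ∨ W = ⊤ := by
  refine or_iff_not_imp_left.2 fun hne => ?_
  obtain ⟨v, hvW, hv, hann⟩ := exists_mem_forall_apply_eq_zero (ladder s false)
    (ladder_mul_self s false) (exists_ladder_false_mul_eq_smul hs) (hW false) hne univ
  have hv_eq := eq_smul_single_of_ladder_false_eq_zero hs fun i => hann i (mem_univ i)
  have hvac : Pi.single (fun _ => false) 1 ∈ W := by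
    rw [hv_eq] at hv hvW
    exact (W.smul_mem_iff (left_ne_zero_of_smul hv)).1 hvW
  rw [eq_top_iff, ← (Pi.basisFun K (Fin n → Bool)).span_eq, Submodule.span_le]
  rintro _ ⟨f, rfl⟩
  rw [Pi.basisFun_apply]
  exact single_mem_of_ladder_true_mem hs (hW true) hvac f

end Irreducible

section IrreducibleRepresentation

variable {ι k A V : Type*} [Field k] [Ring A] [Algebra k A] [AddCommGroup V] [Module k V]
  {ρ : A →ₐ[k] Module.End k V} {φ : A} {w : V}

/-- Irreducibility of a representation `ρ` of an algebra: there are no invariant subspaces besides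
`⊥` and `⊤`. The zero representation is allowed. -/
def IsIrreducibleRep (ρ : A →ₐ[k] Module.End k V) : Prop :=
  ∀ W : Submodule k V, (∀ a, ∀ v ∈ W, ρ a v ∈ W) → W = ⊥ ∨ W = ⊤

/-- The orbit map `a ↦ ρ(a) w` of a vector `w`, comparing left ideals with the representation. -/
def orbitMap (ρ : A →ₐ[k] Module.End k V) (w : V) : A →ₗ[k] V :=
  LinearMap.applyₗ w ∘ₗ ρ.toLinearMap

lemma orbitMap_apply (a : A) : orbitMap ρ w a = ρ a w := rfl

lemma map_orbitMap_eq_top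
    (hρ : IsIrreducibleRep ρ) {J : Ideal A} {x : A} (hx : x ∈ J) (hxw : ρ x w ≠ 0) :
    (J.restrictScalars k).map (orbitMap ρ w) = ⊤ := by
  refine (hρ _ ?_).resolve_left fun hbot => hxw ?_
  · rintro a _ ⟨y, hy, rfl⟩
    exact ⟨a * y, J.mul_mem_left a hy, by simp [orbitMap_apply]⟩
  · have hmem : orbitMap ρ w x ∈ (J.restrictScalars k).map (orbitMap ρ w) :=
      Submodule.mem_map_of_mem hx
    rwa [hbot, Submodule.mem_bot] at hmem

variable [Fintype ι] {b : ι → A}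

lemma linearIndependent_orbitMap_comp
    (hρ : IsIrreducibleRep ρ) (hφw : ρ φ w ≠ 0)
    (hb : Submodule.span k (Set.range b) = (Ideal.span {φ}).restrictScalars k)
    (hcard : Fintype.card ι = Module.finrank k V) :
    LinearIndependent k (orbitMap ρ w ∘ b) := by
  refine linearIndependent_of_top_le_span_of_card_eq_finrank ?_ hcard
  rw [Set.range_comp, Submodule.span_image, hb,
    map_orbitMap_eq_top hρ (Ideal.mem_span_singleton_self φ) hφw]

lemma isAtom_span_singleton
    (hρ : IsIrreducibleRep ρ) (hφw : ρ φ w ≠ 0)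
    (hb : Submodule.span k (Set.range b) = (Ideal.span {φ}).restrictScalars k)
    (hcard : Fintype.card ι = Module.finrank k V) :
    IsAtom (Ideal.span {φ}) := by
  have hinj : ∀ x ∈ Ideal.span {φ}, ρ x w = 0 → x = 0 := by
    have hdisj := Submodule.range_ker_disjoint (linearIndependent_orbitMap_comp hρ hφw hb hcard)
    rw [hb] at hdisj
    exact fun x hx hxw => Submodule.disjoint_def.1 hdisj x hx hxw
  refine ⟨fun hbot => hφw ?_, fun J hJ => ?_⟩
  · simp [Ideal.span_singleton_eq_bot.1 hbot]
  · by_contra hne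
    obtain ⟨x, hxJ, hx⟩ := J.exists_mem_ne_zero_of_ne_bot hne
    have htop := map_orbitMap_eq_top hρ hxJ fun hxw => hx (hinj x (hJ.le hxJ) hxw)
    obtain ⟨y, hyJ, hy⟩ : ρ φ w ∈ (J.restrictScalars k).map (orbitMap ρ w) := htop ▸ trivial
    have hφy : φ - y = 0 := hinj _
      (sub_mem (Ideal.mem_span_singleton_self φ) (hJ.le hyJ))
      (by rw [map_sub, LinearMap.sub_apply, ← hy, orbitMap_apply, sub_self])
    exact hJ.not_ge ((Ideal.span_singleton_le_iff_mem J).2 (sub_eq_zero.1 hφy ▸ hyJ))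

end IrreducibleRepresentation

section Relations

open Finset

variable {N : ℕ} {q c : ℂ} {i j : Fin N}

lemma dual_dual (i : Fin N) : dual (dual i) = i := by
  have := i.2
  ext
  simp only [dual]
  omega

/-- The constant term `c² q^{N-2i+1} (q + q⁻¹)` of the relation for `γ_{i'} γ_i`, with the
exponent shifted because indices start at `0`. -/
def pairConst (N : ℕ) (q c : ℂ) (i : Fin N) : ℂ :=
  c ^ 2 * q ^ ((N : ℤ) - 2 * (i.val : ℤ) - 1) * (q + q⁻¹)

lemma γ_mul_self (h : 2 * i.val + 1 ≠ N) : γ N q c i * γ N q c i = 0 := by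
  simpa [γ] using RingQuot.mkAlgHom_rel ℂ (Rel.sq (q := q) (c := c) i h)

lemma γ_swap (hlt : i < j) (h : i.val + j.val + 1 ≠ N) :
    γ N q c j * γ N q c i = (-(q ^ 2)) • (γ N q c i * γ N q c j) := by
  simpa only [map_mul, map_smul, γ] using
    RingQuot.mkAlgHom_rel ℂ (Rel.swap (q := q) (c := c) i j hlt h)

lemma mkAlgHom_pairSum (i : Fin N) : RingQuot.mkAlgHom ℂ (Rel N q c) (pairSum N q i) =
    ∑ k ∈ Iio i, (q ^ (2 * (k.val : ℤ) - 2 * (i.val : ℤ) + 2)) •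
      (γ N q c k * γ N q c (dual k)) := by
  simp [pairSum, γ]

lemma γ_pair (h : 2 * i.val + 1 < N) :
    γ N q c (dual i) * γ N q c i = (-1 : ℂ) • (γ N q c i * γ N q c (dual i)) +
      (q ^ 2 - q⁻¹ ^ 2) • ∑ k ∈ Iio i, (q ^ (2 * (k.val : ℤ) - 2 * (i.val : ℤ) + 2)) •
        (γ N q c k * γ N q c (dual k)) + algebraMap ℂ _ (pairConst N q c i) := by
  have hrel := RingQuot.mkAlgHom_rel ℂ (Rel.pair (q := q) (c := c) i h)
  rwa [← neg_one_smul ℂ, map_mul, map_add, map_add, map_smul, map_mul, map_smul,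
    mkAlgHom_pairSum, AlgHom.commutes] at hrel

lemma γ_middle (h : 2 * i.val + 1 = N) :
    γ N q c i * γ N q c i =
      (q - q⁻¹) • ∑ k ∈ Iio i, (q ^ (2 * (k.val : ℤ) - 2 * (i.val : ℤ) + 2)) •
        (γ N q c k * γ N q c (dual k)) + algebraMap ℂ _ (c ^ 2) := by
  have hrel := RingQuot.mkAlgHom_rel ℂ (Rel.middle (q := q) (c := c) i h)
  rwa [map_mul, map_add, map_smul, mkAlgHom_pairSum, AlgHom.commutes] at hrel

lemma pairSum_mul_eq_zero {x : Cl N q c} (hx : ∀ k < i, γ N q c (dual k) * x = 0) :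
    (∑ k ∈ Iio i, (q ^ (2 * (k.val : ℤ) - 2 * (i.val : ℤ) + 2)) •
      (γ N q c k * γ N q c (dual k))) * x = 0 := by
  rw [sum_mul]
  refine sum_eq_zero fun k hk => ?_
  rw [smul_mul_assoc, mul_assoc, hx k (mem_Iio.1 hk), mul_zero, smul_zero]

lemma adjoin_range_γ : Algebra.adjoin ℂ (Set.range (γ N q c)) = ⊤ := by
  have hrange : Set.range (γ N q c) =
      RingQuot.mkAlgHom ℂ (Rel N q c) '' Set.range (FreeAlgebra.ι ℂ) := by
    rw [← Set.range_comp]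
    rfl
  rw [hrange, ← AlgHom.map_adjoin, FreeAlgebra.adjoin_range_ι, Algebra.map_top,
    AlgHom.range_eq_top]
  exact RingQuot.mkAlgHom_surjective ℂ _

lemma apply_mem_of_γ_apply_mem {V : Type*} [AddCommGroup V] [Module ℂ V]
    (ρ : Cl N q c →ₐ[ℂ] Module.End ℂ V) {W : Submodule ℂ V}
    (hW : ∀ j, ∀ v ∈ W, ρ (γ N q c j) v ∈ W) (a : Cl N q c) : ∀ v ∈ W, ρ a v ∈ W := by
  have ha : a ∈ Algebra.adjoin ℂ (Set.range (γ N q c)) := adjoin_range_γ ▸ Algebra.mem_top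
  induction ha using Algebra.adjoin_induction with
  | mem x hx =>
    obtain ⟨j, rfl⟩ := hx
    exact hW j
  | algebraMap r => exact fun v hv => by simpa using W.smul_mem r hv
  | add x y _ _ hx hy => exact fun v hv => by simpa using add_mem (hx v hv) (hy v hv)
  | mul x y _ _ hx hy => exact fun v hv => by simpa using hx _ (hy v hv)

end Relations

section Monomials

open Function

variable {n N : ℕ} {q c : ℂ} {φ : Cl N q c}

/-- The tail `γ_{m+1}^{f_{m+1}} ⋯ γ_n^{f_n}` of the monomial `monoLow`, obtained by dropping its
first `m` factors. -/
def monoFrom (N : ℕ) (q c : ℂ) {n : ℕ} (h : n ≤ N) (m : ℕ) (f : Fin n → Bool) : Cl N q c :=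
  (((List.finRange n).drop m).map fun j => if f j then γ N q c (Fin.castLE h j) else 1).prod

lemma monoFrom_eq_mul (h : n ≤ N) (i : Fin n) (f : Fin n → Bool) :
    monoFrom N q c h i f =
      (if f i then γ N q c (Fin.castLE h i) else 1) * monoFrom N q c h (i + 1) f := by
  rw [monoFrom, List.drop_eq_getElem_cons (by simp), List.map_cons, List.prod_cons,
    List.getElem_finRange]
  rfl

lemma monoFrom_update (h : n ≤ N) {i : Fin n} {m : ℕ} (hm : i < m) (f : Fin n → Bool)
    (b : Bool) : monoFrom N q c h m (update f i b) = monoFrom N q c h m f := by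
  refine congrArg List.prod (List.map_congr_left fun j hj => ?_)
  have hij : j ≠ i := by
    rintro rfl
    obtain ⟨l, hl, hlj⟩ := List.mem_drop_iff_getElem.1 hj
    simp only [List.getElem_finRange, Fin.ext_iff, Fin.val_cast] at hlj
    omega
  rw [update_of_ne hij]

/-- The span of the vectors `γ_{m+1}^{i_{m+1}} ⋯ γ_n^{i_n} φ`. These subspaces grow from `ℂ φ` at
`m = n` to the span of the claimed basis at `m = 0`. -/
def monoSpan {n : ℕ} (h : n ≤ N) (φ : Cl N q c) (m : ℕ) : Submodule ℂ (Cl N q c) :=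
  Submodule.span ℂ (Set.range fun f : Fin n → Bool => monoFrom N q c h m f * φ)

lemma monoSpan_self (h : n ≤ N) : monoSpan h φ n = Submodule.span ℂ {φ} := by
  simp [monoSpan, monoFrom, List.drop_eq_nil_of_le, Set.range_const]

lemma monoSpan_eq_sup (h : n ≤ N) (i : Fin n) :
    monoSpan h φ i = monoSpan h φ (i + 1) ⊔
      (monoSpan h φ (i + 1)).map (LinearMap.mulLeft ℂ (γ N q c (Fin.castLE h i))) := by
  refine le_antisymm (Submodule.span_le.2 ?_) (sup_le (Submodule.span_le.2 ?_)
    ((Submodule.map_span_le _ _ _).2 ?_))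
  · rintro _ ⟨f, rfl⟩
    have hf : monoFrom N q c h (i + 1) f * φ ∈ monoSpan h φ (i + 1) :=
      Submodule.subset_span ⟨f, rfl⟩
    cases hi : f i
    · exact Submodule.mem_sup_left (by simpa [monoFrom_eq_mul, hi] using hf)
    · exact Submodule.mem_sup_right ⟨_, hf, by simp [monoFrom_eq_mul, hi, mul_assoc]⟩
  · rintro _ ⟨f, rfl⟩
    exact Submodule.subset_span ⟨update f i false, by simp [monoFrom_eq_mul, monoFrom_update]⟩
  · rintro _ ⟨f, rfl⟩
    exact Submodule.subset_span
      ⟨update f i true, by simp [monoFrom_eq_mul, monoFrom_update, mul_assoc]⟩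

lemma monoSpan_succ_le (h : n ≤ N) (i : Fin n) : monoSpan h φ (i + 1) ≤ monoSpan h φ i :=
  (monoSpan_eq_sup h i).ge.trans' le_sup_left

lemma γ_mul_mem_monoSpan (h : n ≤ N) (i : Fin n) {x : Cl N q c}
    (hx : x ∈ monoSpan h φ (i + 1)) : γ N q c (Fin.castLE h i) * x ∈ monoSpan h φ i :=
  (monoSpan_eq_sup h i).ge (Submodule.mem_sup_right ⟨x, hx, rfl⟩)

lemma monoSpan_le {h : n ≤ N} {i : Fin n} {U : Submodule ℂ (Cl N q c)}
    (hU : ∀ x ∈ monoSpan h φ (i + 1), x ∈ U ∧ γ N q c (Fin.castLE h i) * x ∈ U) :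
    monoSpan h φ i ≤ U := by
  rw [monoSpan_eq_sup, sup_le_iff, Submodule.map_le_iff_le_comap]
  exact ⟨fun x hx => (hU x hx).1, fun x hx => (hU x hx).2⟩

/-- A vacuum vector of `Cl_N(q,c)`, `N ∈ {2n, 2n+1}`: it is killed by the annihilators
`γ_{n'}, …, γ_{1'}` and, when there is a middle generator, is an eigenvector of it. -/
structure IsVacuum (n : ℕ) (φ : Cl N q c) : Prop where
  γ_mul_eq_zero : ∀ k : Fin N, N ≤ k + n → γ N q c k * φ = 0
  exists_middle_mul_eq_smul : ∀ k : Fin N, 2 * k.val + 1 = N → ∃ a : ℂ, γ N q c k * φ = a • φ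

namespace IsVacuum

lemma γ_mul_eq_zero_of_mem_monoSpan (hφ : IsVacuum n φ) (hN : 2 * n ≤ N) {m : ℕ} (hm : m ≤ n)
    {k : Fin N} (hk : N ≤ k + m) {x : Cl N q c} (hx : x ∈ monoSpan (n := n) (by omega) φ m) :
    γ N q c k * x = 0 := by
  induction hm using Nat.decreasingInduction generalizing x with
  | self =>
    rw [monoSpan_self] at hx
    obtain ⟨a, rfl⟩ := Submodule.mem_span_singleton.1 hx
    rw [mul_smul_comm, hφ.γ_mul_eq_zero k hk, smul_zero]
  | of_succ m hm ih =>
    obtain ⟨i, rfl⟩ : ∃ i : Fin n, m = i := ⟨⟨m, hm⟩, rfl⟩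
    have hik : Fin.castLE (by omega : n ≤ N) i < k := by
      rw [Fin.lt_def, Fin.val_castLE]
      omega
    have hne : (Fin.castLE (by omega : n ≤ N) i).val + k.val + 1 ≠ N := by
      rw [Fin.val_castLE]
      omega
    refine monoSpan_le (U := LinearMap.ker (LinearMap.mulLeft ℂ (γ N q c k)))
      (fun y hy => ⟨ih (by omega) hy, ?_⟩) hx
    rw [LinearMap.mem_ker, LinearMap.mulLeft_apply, ← mul_assoc,
      γ_swap hik hne, smul_mul_assoc, mul_assoc, ih (by omega) hy, mul_zero, smul_zero]

lemma γ_mul_mem_span_singleton (hφ : IsVacuum n φ) (hN' : N ≤ 2 * n + 1) {k : Fin N} (hk : n ≤ k)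
    {x : Cl N q c} (hx : x ∈ Submodule.span ℂ {φ}) : γ N q c k * x ∈ Submodule.span ℂ {φ} := by
  obtain ⟨a, rfl⟩ := Submodule.mem_span_singleton.1 hx
  rw [mul_smul_comm]
  refine Submodule.smul_mem _ a ?_
  by_cases hkn : N ≤ k + n
  · rw [hφ.γ_mul_eq_zero k hkn]
    exact zero_mem _
  · obtain ⟨b, hb⟩ := hφ.exists_middle_mul_eq_smul k (by omega)
    exact hb ▸ Submodule.smul_mem _ b (Submodule.mem_span_singleton_self φ)

lemma γ_dual_mul_γ_mul_eq_smul (hφ : IsVacuum n φ) (hN : 2 * n ≤ N) (i : Fin n) {x : Cl N q c}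
    (hx : x ∈ monoSpan (n := n) (by omega) φ (i + 1)) :
    γ N q c (dual (Fin.castLE (by omega) i)) * γ N q c (Fin.castLE (by omega) i) * x =
      pairConst N q c (Fin.castLE (by omega) i) • x := by
  have hkill (j : Fin N) (hj : j.val ≤ i.val) : γ N q c (dual j) * x = 0 :=
    hφ.γ_mul_eq_zero_of_mem_monoSpan hN i.2 (by simp only [dual]; omega) hx
  rw [γ_pair (by rw [Fin.val_castLE]; omega), add_mul, add_mul, smul_mul_assoc, mul_assoc,
    hkill _ le_rfl, smul_mul_assoc, pairSum_mul_eq_zero fun j hj => hkill j (Fin.lt_def.1 hj).le,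
    mul_zero, smul_zero, smul_zero, zero_add, zero_add, ← Algebra.smul_def]

lemma γ_mul_mem_monoSpan_of_le (hφ : IsVacuum n φ) (hN : 2 * n ≤ N) (hN' : N ≤ 2 * n + 1) {m : ℕ}
    (hm : m ≤ n) {k : Fin N} (hk : m ≤ k) {x : Cl N q c}
    (hx : x ∈ monoSpan (n := n) (by omega) φ m) :
    γ N q c k * x ∈ monoSpan (n := n) (by omega) φ m := by
  induction hm using Nat.decreasingInduction generalizing x with
  | self =>
    rw [monoSpan_self] at hx ⊢
    exact hφ.γ_mul_mem_span_singleton hN' hk hx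
  | of_succ m hm ih =>
    have hnN : n ≤ N := by omega
    obtain ⟨i, rfl⟩ : ∃ i : Fin n, m = i := ⟨⟨m, hm⟩, rfl⟩
    refine monoSpan_le
      (U := (monoSpan hnN φ i).comap (LinearMap.mulLeft ℂ (γ N q c k))) (fun y hy => ?_) hx
    simp only [Submodule.mem_comap, LinearMap.mulLeft_apply, ← mul_assoc]
    rcases hk.eq_or_lt with hik | hik
    · obtain rfl : k = Fin.castLE hnN i := Fin.ext hik.symm
      rw [γ_mul_self (by rw [Fin.val_castLE]; omega), zero_mul]
      exact ⟨γ_mul_mem_monoSpan hnN i hy, zero_mem _⟩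
    refine ⟨monoSpan_succ_le hnN i (ih hik hy), ?_⟩
    by_cases hkd : k = dual (Fin.castLE hnN i)
    · rw [hkd, hφ.γ_dual_mul_γ_mul_eq_smul hN i hy]
      exact Submodule.smul_mem _ _ (monoSpan_succ_le hnN i hy)
    · have hne : (Fin.castLE hnN i).val + k.val + 1 ≠ N := fun h => hkd (Fin.ext (by
        simp only [dual]
        omega))
      rw [γ_swap hik hne, smul_mul_assoc, mul_assoc]
      exact Submodule.smul_mem _ _ (γ_mul_mem_monoSpan hnN i (ih hik hy))

lemma span_range_monoLow_mul (hφ : IsVacuum n φ) (hN : 2 * n ≤ N) (hN' : N ≤ 2 * n + 1) :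
    Submodule.span ℂ
        (Set.range fun f : Fin n → Bool => monoLow N q c (by omega : n ≤ N) f * φ) =
      (Ideal.span {φ}).restrictScalars ℂ := by
  refine le_antisymm (Submodule.span_le.2 ?_) fun x hx => ?_
  · rintro _ ⟨f, rfl⟩
    exact Ideal.mul_mem_left _ _ (Ideal.mem_span_singleton_self φ)
  · obtain ⟨a, rfl⟩ := Ideal.mem_span_singleton'.1 hx
    refine apply_mem_of_γ_apply_mem (Algebra.lmul ℂ (Cl N q c)) (fun j y hy => ?_) a φ ?_
    · exact hφ.γ_mul_mem_monoSpan_of_le hN hN' n.zero_le j.val.zero_le hy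
    · exact Submodule.subset_span ⟨fun _ => false, by simp [monoLow]⟩

end IsVacuum

end Monomials

section SpinRepresentation

open Finset

variable {n N : ℕ} {q c μ : ℂ}

/-- The images of the generators in the spin representation, on functions on `Fin n → Bool`: the
lower half acts by creation, the upper half by rescaled annihilation, and the middle generator
(if any) by `μ` times the total weight. -/
def spinGen (n N : ℕ) (q c μ : ℂ) (j : Fin N) : Module.End ℂ ((Fin n → Bool) → ℂ) :=
  if hj : j.val < n then ladder (-q ^ 2) true ⟨j, hj⟩
  else if hj : (dual j).val < n then pairConst N q c (dual j) • ladder (-q ^ 2) false ⟨dual j, hj⟩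
  else μ • weightOp (-q ^ 2) n

lemma exists_eq_castLE_or_dual_castLE_or_middle (hN : 2 * n ≤ N) (hN' : N ≤ 2 * n + 1)
    (j : Fin N) :
    (∃ i : Fin n, j = Fin.castLE (by omega) i) ∨ (∃ i : Fin n, j = dual (Fin.castLE (by omega) i)) ∨
      2 * j.val + 1 = N := by
  have hj := j.2
  rcases lt_or_ge j.val n with hlt | hge
  · exact .inl ⟨⟨j, hlt⟩, rfl⟩
  rcases lt_or_ge (dual j).val n with hlt | hge'
  · exact .inr (.inl ⟨⟨dual j, hlt⟩, (dual_dual j).symm⟩)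
  · simp only [dual] at hge'
    omega

lemma spinGen_castLE (h : n ≤ N) (i : Fin n) :
    spinGen n N q c μ (Fin.castLE h i) = ladder (-q ^ 2) true i := by
  simp [spinGen]

lemma spinGen_dual_castLE (hN : 2 * n ≤ N) (i : Fin n) :
    spinGen n N q c μ (dual (Fin.castLE (by omega) i)) =
      pairConst N q c (Fin.castLE (by omega) i) • ladder (-q ^ 2) false i := by
  have hdual : ¬ (dual (Fin.castLE (by omega : n ≤ N) i)).val < n := by
    simp only [dual, Fin.val_castLE]
    omega
  simp [spinGen, hdual, dual_dual]

lemma spinGen_middle (hN : 2 * n ≤ N) {j : Fin N} (hj : 2 * j.val + 1 = N) :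
    spinGen n N q c μ j = μ • weightOp (-q ^ 2) n := by
  have hjn : ¬ j.val < n := by omega
  have hdual : ¬ (dual j).val < n := by
    simp only [dual]
    omega
  simp only [spinGen, hjn, hdual, dite_false]

lemma spinGen_mul_self (hN : 2 * n ≤ N) (hN' : N ≤ 2 * n + 1) {j : Fin N}
    (hj : 2 * j.val + 1 ≠ N) : spinGen n N q c μ j * spinGen n N q c μ j = 0 := by
  rcases exists_eq_castLE_or_dual_castLE_or_middle hN hN' j with ⟨i, rfl⟩ | ⟨i, rfl⟩ | hmid
  · rw [spinGen_castLE, ladder_mul_self]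
  · rw [spinGen_dual_castLE hN, smul_mul_smul_comm, ladder_mul_self, smul_zero]
  · exact absurd hmid hj

lemma spinGen_swap (hN : 2 * n ≤ N) (hN' : N ≤ 2 * n + 1) {i j : Fin N} (hlt : i < j)
    (hij : i.val + j.val + 1 ≠ N) :
    spinGen n N q c μ j * spinGen n N q c μ i =
      (-q ^ 2) • (spinGen n N q c μ i * spinGen n N q c μ j) := by
  rw [Fin.lt_def] at hlt
  rcases exists_eq_castLE_or_dual_castLE_or_middle hN hN' i with ⟨k, rfl⟩ | ⟨k, rfl⟩ | hi <;>
    rcases exists_eq_castLE_or_dual_castLE_or_middle hN hN' j with ⟨l, rfl⟩ | ⟨l, rfl⟩ | hj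
  · simp only [spinGen_castLE]
    exact ladder_mul_ladder_true _ true hlt
  · have hkl : k ≠ l := by
      rintro rfl
      simp only [dual, Fin.val_castLE] at hij
      omega
    rw [spinGen_castLE, spinGen_dual_castLE hN, smul_mul_assoc, mul_smul_comm,
      ladder_false_mul_ladder_true _ hkl, smul_comm]
  · rw [spinGen_castLE, spinGen_middle hN hj, smul_mul_assoc, mul_smul_comm,
      weightOp_mul_ladder_true _ k.2, smul_comm]
  · simp only [dual, Fin.val_castLE] at hlt
    omega
  · have hlk : l < k := by
      simp only [dual, Fin.val_castLE] at hlt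
      rw [Fin.lt_def]
      omega
    simp only [spinGen_dual_castLE hN, smul_mul_smul_comm, ladder_false_mul_ladder _ false hlk]
    rw [mul_comm, smul_comm]
  · simp only [dual, Fin.val_castLE] at hlt
    omega
  · simp only [Fin.val_castLE] at hlt
    omega
  · rw [spinGen_dual_castLE hN, spinGen_middle hN hi, smul_mul_smul_comm, smul_mul_smul_comm,
      ladder_false_mul_weightOp _ l.2, mul_comm, smul_comm]
  · omega

lemma pairConst_mul_zpow (hq : q ≠ 0) (i k : Fin N) :
    (q ^ 2 - q⁻¹ ^ 2) * q ^ (2 * (k.val : ℤ) - 2 * (i.val : ℤ) + 2) * pairConst N q c k =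
      pairConst N q c i * ((-q ^ 2) ^ 2 - 1) := by
  have hshift : q ^ (2 * (k.val : ℤ) - 2 * (i.val : ℤ) + 2) * q ^ ((N : ℤ) - 2 * k.val - 1) =
      q ^ ((N : ℤ) - 2 * i.val - 1) * q ^ 2 := by
    rw [← zpow_add₀ hq, ← zpow_natCast q 2, ← zpow_add₀ hq]
    congr 1
    push_cast
    ring
  have hsq : (q ^ 2 - q⁻¹ ^ 2) * q ^ 2 = (-q ^ 2) ^ 2 - 1 := by
    field_simp
  calc _ = c ^ 2 * (q + q⁻¹) * (q ^ 2 - q⁻¹ ^ 2) *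
        (q ^ (2 * (k.val : ℤ) - 2 * (i.val : ℤ) + 2) * q ^ ((N : ℤ) - 2 * k.val - 1)) := by
        rw [pairConst]
        ring
    _ = pairConst N q c i * ((q ^ 2 - q⁻¹ ^ 2) * q ^ 2) := by
        rw [hshift, pairConst]
        ring
    _ = _ := by rw [hsq]

lemma sum_Iio_sub {M : Type*} [AddCommGroup M] (f : ℕ → M) (i : Fin N) :
    ∑ k ∈ Iio i, (f (k.val + 1) - f k.val) = f i - f 0 := by
  rw [← sum_range_sub, ← Nat.Iio_eq_range, ← Fin.map_valEmbedding_Iio, sum_map]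
  rfl

lemma smul_pairSum_spinGen (hN : 2 * n ≤ N) (hq : q ≠ 0) {i : Fin N} (hi : i.val ≤ n) :
    (q ^ 2 - q⁻¹ ^ 2) • ∑ k ∈ Iio i, q ^ (2 * (k.val : ℤ) - 2 * (i.val : ℤ) + 2) •
        (spinGen n N q c μ k * spinGen n N q c μ (dual k)) =
      pairConst N q c i • (weightOp (-q ^ 2) i ^ 2 - 1) := by
  have hterm : ∀ k ∈ Iio i, (q ^ 2 - q⁻¹ ^ 2) • q ^ (2 * (k.val : ℤ) - 2 * (i.val : ℤ) + 2) •
        (spinGen n N q c μ k * spinGen n N q c μ (dual k)) =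
      pairConst N q c i • (weightOp (-q ^ 2) (k.val + 1) ^ 2 - weightOp (-q ^ 2) k.val ^ 2) := by
    intro k hk
    obtain ⟨k, rfl⟩ : ∃ l : Fin n, k = Fin.castLE (by omega) l :=
      ⟨⟨k, (Fin.lt_def.1 (mem_Iio.1 hk)).trans_le hi⟩, rfl⟩
    rw [spinGen_castLE, spinGen_dual_castLE hN, mul_smul_comm, smul_smul, smul_smul,
      pairConst_mul_zpow hq i, mul_smul, smul_ladder_true_mul_ladder_false, Fin.val_castLE]
  rw [smul_sum, sum_congr rfl hterm, ← smul_sum,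
    sum_Iio_sub (fun m => weightOp (-q ^ 2) m ^ 2), weightOp_zero, one_pow]

lemma spinGen_pair (hN : 2 * n ≤ N) (hN' : N ≤ 2 * n + 1) (hq : q ≠ 0) {i : Fin N}
    (hi : 2 * i.val + 1 < N) :
    spinGen n N q c μ (dual i) * spinGen n N q c μ i =
      -(spinGen n N q c μ i * spinGen n N q c μ (dual i)) +
        (q ^ 2 - q⁻¹ ^ 2) • ∑ k ∈ Iio i, q ^ (2 * (k.val : ℤ) - 2 * (i.val : ℤ) + 2) •
          (spinGen n N q c μ k * spinGen n N q c μ (dual k)) +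
        algebraMap ℂ _ (pairConst N q c i) := by
  rw [smul_pairSum_spinGen hN hq (by omega), Algebra.algebraMap_eq_smul_one]
  have hnN : n ≤ N := by omega
  obtain ⟨i, rfl⟩ : ∃ k : Fin n, i = Fin.castLE hnN k := ⟨⟨i, by omega⟩, rfl⟩
  rw [spinGen_castLE, spinGen_dual_castLE hN, smul_mul_assoc, mul_smul_comm, Fin.val_castLE,
    ← ladder_anticommutator]
  module

lemma spinGen_middle_mul_self (hN : 2 * n ≤ N) (hN' : N ≤ 2 * n + 1) (hq : q ≠ 0)
    (hqq : q + q⁻¹ ≠ 0) (hμ : μ ^ 2 = c ^ 2) {i : Fin N} (hi : 2 * i.val + 1 = N) :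
    spinGen n N q c μ i * spinGen n N q c μ i =
      (q - q⁻¹) • ∑ k ∈ Iio i, q ^ (2 * (k.val : ℤ) - 2 * (i.val : ℤ) + 2) •
          (spinGen n N q c μ k * spinGen n N q c μ (dual k)) +
        algebraMap ℂ _ (c ^ 2) := by
  have hin : i.val = n := by omega
  have hconst : pairConst N q c i = (q + q⁻¹) * c ^ 2 := by
    have hexp : (N : ℤ) - 2 * (i.val : ℤ) - 1 = 0 := by omega
    rw [pairConst, hexp, zpow_zero, mul_one, mul_comm]
  have hfactor : q ^ 2 - q⁻¹ ^ 2 = (q + q⁻¹) * (q - q⁻¹) := by ring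
  have hsum := smul_pairSum_spinGen (c := c) (μ := μ) hN hq hin.le
  rw [hconst, hfactor, mul_smul, mul_smul] at hsum
  rw [smul_right_injective _ hqq hsum, spinGen_middle hN hi, smul_mul_smul_comm, ← pow_two,
    ← pow_two, hμ, hin, Algebra.algebraMap_eq_smul_one]
  module

lemma lift_spinGen_pairSum (i : Fin N) :
    FreeAlgebra.lift ℂ (spinGen n N q c μ) (pairSum N q i) =
      ∑ k ∈ Iio i, q ^ (2 * (k.val : ℤ) - 2 * (i.val : ℤ) + 2) •
        (spinGen n N q c μ k * spinGen n N q c μ (dual k)) := by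
  simp [pairSum, gen]

lemma lift_spinGen_eq_of_rel (hN : 2 * n ≤ N) (hN' : N ≤ 2 * n + 1) (hq : q ≠ 0)
    (hqq : q + q⁻¹ ≠ 0) (hμ : μ ^ 2 = c ^ 2) ⦃x y : FreeAlgebra ℂ (Fin N)⦄ (h : Rel N q c x y) :
    FreeAlgebra.lift ℂ (spinGen n N q c μ) x = FreeAlgebra.lift ℂ (spinGen n N q c μ) y := by
  have hgen (j : Fin N) : FreeAlgebra.lift ℂ (spinGen n N q c μ) (gen j) = spinGen n N q c μ j :=
    FreeAlgebra.lift_ι_apply _ _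
  induction h with
  | sq i h => simpa only [map_mul, map_zero, hgen] using spinGen_mul_self hN hN' h
  | swap i j hlt h => simpa only [map_mul, map_smul, hgen] using spinGen_swap hN hN' hlt h
  | pair i h =>
    rw [map_add, map_add, map_neg, map_mul, map_mul, map_smul, AlgHom.commutes,
      lift_spinGen_pairSum, hgen, hgen]
    exact spinGen_pair hN hN' hq h
  | middle i h =>
    rw [map_add, map_mul, map_smul, AlgHom.commutes, lift_spinGen_pairSum, hgen]
    exact spinGen_middle_mul_self hN hN' hq hqq hμ h

/-- The spin representation of `Cl_N(q,c)`, `N ∈ {2n, 2n+1}`, of dimension `2^n`. For `N` odd the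
two square roots `μ` of `c²` give its two versions. -/
def spinRep (hN : 2 * n ≤ N) (hN' : N ≤ 2 * n + 1) (hq : q ≠ 0) (hqq : q + q⁻¹ ≠ 0)
    (hμ : μ ^ 2 = c ^ 2) : Cl N q c →ₐ[ℂ] Module.End ℂ ((Fin n → Bool) → ℂ) :=
  RingQuot.liftAlgHom ℂ
    ⟨FreeAlgebra.lift ℂ (spinGen n N q c μ), lift_spinGen_eq_of_rel hN hN' hq hqq hμ⟩

lemma spinRep_γ (hN : 2 * n ≤ N) (hN' : N ≤ 2 * n + 1) (hq : q ≠ 0) (hqq : q + q⁻¹ ≠ 0)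
    (hμ : μ ^ 2 = c ^ 2) (j : Fin N) :
    spinRep hN hN' hq hqq hμ (γ N q c j) = spinGen n N q c μ j := by
  rw [spinRep, γ, RingQuot.liftAlgHom_mkAlgHom_apply]
  exact FreeAlgebra.lift_ι_apply _ _

lemma pairConst_ne_zero (hq : q ≠ 0) (hqq : q + q⁻¹ ≠ 0) (hc : c ≠ 0) (i : Fin N) :
    pairConst N q c i ≠ 0 :=
  mul_ne_zero (mul_ne_zero (pow_ne_zero 2 hc) (zpow_ne_zero _ hq)) hqq

lemma isIrreducibleRep_spinRep (hN : 2 * n ≤ N) (hN' : N ≤ 2 * n + 1) (hq : q ≠ 0)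
    (hqq : q + q⁻¹ ≠ 0) (hμ : μ ^ 2 = c ^ 2) (hc : c ≠ 0) :
    IsIrreducibleRep (spinRep hN hN' hq hqq hμ) := by
  intro W hW
  refine eq_bot_or_eq_top_of_ladder_mem (s := -q ^ 2) (by simpa using hq) ?_
  rintro (_ | _) i v hv
  · have hmem := hW (γ N q c (dual (Fin.castLE (by omega) i))) v hv
    rwa [spinRep_γ, spinGen_dual_castLE hN, LinearMap.smul_apply,
      W.smul_mem_iff (pairConst_ne_zero hq hqq hc _)] at hmem
  · have hmem := hW (γ N q c (Fin.castLE (by omega) i)) v hv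
    rwa [spinRep_γ, spinGen_castLE] at hmem

end SpinRepresentation

section Vacuum

open Function

variable {n N : ℕ} {q c μ : ℂ}

lemma prodFrom_eq_mul (i : Fin N) :
    prodFrom N q c i = γ N q c i * prodFrom N q c (i + 1) := by
  rw [prodFrom, List.drop_eq_getElem_cons (by simp), List.map_cons, List.prod_cons,
    List.getElem_finRange]
  rfl

lemma prodFrom_of_le {m : ℕ} (h : N ≤ m) : prodFrom N q c m = 1 := by
  rw [prodFrom, List.drop_eq_nil_of_le (by simpa using h), List.map_nil, List.prod_nil]

lemma γ_mul_prodFrom_eq_zero {m : ℕ} (hm : N ≤ 2 * m) {k : Fin N} (hk : m ≤ k) :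
    γ N q c k * prodFrom N q c m = 0 := by
  induction hk using Nat.decreasingInduction with
  | self => rw [prodFrom_eq_mul, ← mul_assoc, γ_mul_self (by omega), zero_mul]
  | of_succ m hmk ih =>
    obtain ⟨m, rfl⟩ : ∃ i : Fin N, m = i := ⟨⟨m, hmk.trans k.2⟩, rfl⟩
    rw [prodFrom_eq_mul, ← mul_assoc, γ_swap hmk (by omega), smul_mul_assoc, mul_assoc,
      ih (by omega), mul_zero, smul_zero]

lemma isVacuum_prodFrom (hN : N = 2 * n) : IsVacuum n (prodFrom N q c n) where
  γ_mul_eq_zero k hk := γ_mul_prodFrom_eq_zero hN.le (by omega)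
  exists_middle_mul_eq_smul k hk := by omega

lemma isVacuum_add_middle_mul_prodFrom (hN : N = 2 * n + 1) (hμ : μ ^ 2 = c ^ 2) {m : Fin N}
    (hm : m.val = n) :
    IsVacuum n ((algebraMap ℂ (Cl N q c) μ + γ N q c m) * prodFrom N q c (n + 1)) where
  γ_mul_eq_zero k hk := by
    have hkill : γ N q c k * prodFrom N q c (n + 1) = 0 :=
      γ_mul_prodFrom_eq_zero (by omega) (by omega)
    have hmk : m < k := Fin.lt_def.2 (by omega)
    rw [add_mul, mul_add, ← mul_assoc, ← mul_assoc, ← Algebra.commutes, mul_assoc, hkill,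
      γ_swap hmk (by omega), smul_mul_assoc, mul_assoc, hkill, mul_zero, mul_zero, smul_zero,
      add_zero]
  exists_middle_mul_eq_smul k hk := by
    obtain rfl : k = m := Fin.ext (by omega)
    have hkill : ∀ j < k, γ N q c (dual j) * prodFrom N q c (n + 1) = 0 := fun j hj =>
      γ_mul_prodFrom_eq_zero (by omega) (by
        rw [Fin.lt_def] at hj
        simp only [dual]
        omega)
    have hsq : γ N q c k * (γ N q c k * prodFrom N q c (n + 1)) =
        c ^ 2 • prodFrom N q c (n + 1) := by
      rw [← mul_assoc, γ_middle hk, add_mul, smul_mul_assoc, pairSum_mul_eq_zero hkill, smul_zero,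
        zero_add, ← Algebra.smul_def]
    refine ⟨μ, ?_⟩
    rw [add_mul, mul_add, hsq, ← hμ, ← Algebra.smul_def, mul_smul_comm, smul_add, smul_smul,
      pow_two, add_comm]

lemma spinRep_prodFrom_apply_ne_zero (hN : 2 * n ≤ N) (hN' : N ≤ 2 * n + 1) (hq : q ≠ 0)
    (hqq : q + q⁻¹ ≠ 0) (hμ : μ ^ 2 = c ^ 2) (hc : c ≠ 0) {m : ℕ} (hm : N ≤ n + m)
    {f : Fin n → Bool} (hf : ∀ i : Fin n, i + m < N → f i = false) :
    spinRep hN hN' hq hqq hμ (prodFrom N q c m) (fun _ => 1) f ≠ 0 := by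
  rcases le_or_gt N m with hNm | hmN
  · simp [prodFrom_of_le hNm]
  have hnN : n ≤ N := by omega
  obtain ⟨i, rfl⟩ : ∃ i : Fin n, m = dual (Fin.castLE hnN i) :=
    ⟨⟨N - 1 - m, by omega⟩, by simp only [dual, Fin.val_castLE]; omega⟩
  have hi : i + (dual (Fin.castLE hnN i)).val + 1 = N := by
    simp only [dual, Fin.val_castLE]
    omega
  have hnext := spinRep_prodFrom_apply_ne_zero hN hN' hq hqq hμ hc
    (m := dual (Fin.castLE hnN i) + 1) (by omega)
    (f := update f i true) fun j hj => by
      rw [update_of_ne (by rintro rfl; omega), hf j (by omega)]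
  rw [prodFrom_eq_mul, map_mul, spinRep_γ, spinGen_dual_castLE hN, Module.End.mul_apply,
    LinearMap.smul_apply, Pi.smul_apply, ladder_apply, if_pos (hf i (by omega))]
  exact smul_ne_zero (pairConst_ne_zero hq hqq hc _)
    (mul_ne_zero (weight_ne_zero (by simpa using hq) _ _) hnext)
termination_by N - m

lemma spinRep_prodFrom_ne_zero (hN : 2 * n ≤ N) (hN' : N ≤ 2 * n + 1) (hq : q ≠ 0)
    (hqq : q + q⁻¹ ≠ 0) (hμ : μ ^ 2 = c ^ 2) (hc : c ≠ 0) {m : ℕ} (hm : N ≤ n + m) :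
    spinRep hN hN' hq hqq hμ (prodFrom N q c m) (fun _ => 1) ≠ 0 := fun h0 =>
  spinRep_prodFrom_apply_ne_zero hN hN' hq hqq hμ hc hm (fun _ _ => rfl)
    (congrFun h0 fun _ => false)

lemma spinRep_add_middle_mul_prodFrom_ne_zero (hN : N = 2 * n + 1) (hq : q ≠ 0)
    (hqq : q + q⁻¹ ≠ 0) (hμ : μ ^ 2 = c ^ 2) (hc : c ≠ 0) {m : Fin N} (hm : m.val = n) :
    spinRep (by omega : 2 * n ≤ N) hN.le hq hqq hμ
      ((algebraMap ℂ (Cl N q c) μ + γ N q c m) * prodFrom N q c (n + 1)) (fun _ => 1) ≠ 0 := by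
  intro h0
  have hμ0 : μ ≠ 0 := by
    rw [← pow_ne_zero_iff two_ne_zero, hμ]
    exact pow_ne_zero 2 hc
  have happly := congrFun h0 fun _ => false
  have hweight : weight (-q ^ 2) (fun _ : Fin n => false) n = 1 := by simp [weight]
  rw [map_mul, map_add, AlgHom.commutes, spinRep_γ, spinGen_middle (by omega) (by omega),
    Module.End.mul_apply, LinearMap.add_apply, Pi.add_apply, LinearMap.smul_apply,
    Module.algebraMap_end_apply, Pi.smul_apply, Pi.smul_apply, weightOp_apply, hweight, one_mul,
    ← two_smul ℂ] at happly
  exact smul_ne_zero two_ne_zero (smul_ne_zero hμ0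
    (spinRep_prodFrom_apply_ne_zero (by omega) hN.le hq hqq hμ hc (by omega) fun _ _ => rfl)) happly

end Vacuum

theorem left_ideal_minimal_and_basis_general (n ε : ℕ) (hn : 1 ≤ n)
    (N : ℕ) (hNdef : N = 2 * n + ε) (q c : ℂ)
    (hq : q ≠ 0) (hq2 : q ^ 2 ≠ -1) (hc : c ≠ 0)
    (φ : Cl N q c)
    (hφ : (ε = 0 ∧ φ = prodFrom N q c n) ∨
          (ε = 1 ∧ ∃ ν : ℂ, (ν = 1 ∨ ν = -1) ∧
            φ = (algebraMap ℂ (Cl N q c) (ν * c) + γ N q c ⟨n, by omega⟩) *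
              prodFrom N q c (n + 1))) :
    LinearIndependent ℂ
      (fun f : Fin n → Bool => monoLow N q c (by omega) f * φ) ∧
    Submodule.span ℂ
        (Set.range (fun f : Fin n → Bool => monoLow N q c (by omega) f * φ)) =
      (Ideal.span {φ}).restrictScalars ℂ ∧
    Ideal.span {φ} ≠ ⊥ ∧
    (∀ J : Ideal (Cl N q c), J ≤ Ideal.span {φ} → J = ⊥ ∨ J = Ideal.span {φ}) := by
  have hqq : q + q⁻¹ ≠ 0 := fun h => hq2 (by field_simp at h; linear_combination h)
  have hN : 2 * n ≤ N := by omega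
  have hN' : N ≤ 2 * n + 1 := by omega
  obtain ⟨μ, hμ, hvac, hne⟩ : ∃ (μ : ℂ) (hμ : μ ^ 2 = c ^ 2),
      IsVacuum n φ ∧ spinRep hN hN' hq hqq hμ φ (fun _ => 1) ≠ 0 := by
    rcases hφ with ⟨rfl, rfl⟩ | ⟨rfl, ν, hν, rfl⟩
    · exact ⟨c, rfl, isVacuum_prodFrom hNdef, spinRep_prodFrom_ne_zero _ _ _ _ _ hc (by omega)⟩
    · have hμ : (ν * c) ^ 2 = c ^ 2 := by rcases hν with rfl | rfl <;> ring
      exact ⟨ν * c, hμ, isVacuum_add_middle_mul_prodFrom hNdef hμ rfl,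
        spinRep_add_middle_mul_prodFrom_ne_zero hNdef hq hqq hμ hc rfl⟩
  have hirr := isIrreducibleRep_spinRep hN hN' hq hqq hμ hc
  have hspan := hvac.span_range_monoLow_mul hN hN'
  have hcard : Fintype.card (Fin n → Bool) = Module.finrank ℂ ((Fin n → Bool) → ℂ) := by simp
  have hatom := isAtom_span_singleton hirr hne hspan hcard
  exact ⟨(linearIndependent_orbitMap_comp hirr hne hspan hcard).of_comp, hspan, hatom.1,
    fun _ hJ => hatom.le_iff.1 hJ⟩

/-- the left ideal `I_L^ν = Cl_N(q,c)·φ_N^ν` is minimal, and the elements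
`γ_1^{i_1}⋯γ_n^{i_n} φ_N^ν` (`i_j ∈ {0,1}`) form a vector space basis of it. -/
theorem left_ideal_minimal_and_basis (n ε : ℕ) (hn : 1 ≤ n) (hε : ε ≤ 1)
    (N : ℕ) (hNdef : N = 2 * n + ε) (hN : 3 ≤ N) (q c : ℂ)
    (hq : q ≠ 0) (hqr : ∀ m : ℕ, 0 < m → q ^ m ≠ 1) (hc : c ≠ 0)
    (φ : Cl N q c)
    (hφ : (ε = 0 ∧ φ = prodFrom N q c n) ∨
          (ε = 1 ∧ ∃ ν : ℂ, (ν = 1 ∨ ν = -1) ∧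
            φ = (algebraMap ℂ (Cl N q c) (ν * c) + γ N q c ⟨n, by omega⟩) *
              prodFrom N q c (n + 1))) :
    LinearIndependent ℂ
      (fun f : Fin n → Bool => monoLow N q c (by omega) f * φ) ∧
    Submodule.span ℂ
        (Set.range (fun f : Fin n → Bool => monoLow N q c (by omega) f * φ)) =
      (Ideal.span {φ}).restrictScalars ℂ ∧
    Ideal.span {φ} ≠ ⊥ ∧
    (∀ J : Ideal (Cl N q c), J ≤ Ideal.span {φ} → J = ⊥ ∨ J = Ideal.span {φ}) :=
  left_ideal_minimal_and_basis_general n ε hn N hNdef q c hq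
    (fun hq2 => hqr 4 (by norm_num) (by linear_combination (q ^ 2 - 1) * hq2)) hc φ hφ

end FRT
end
end
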